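/- arXiv:1211.5579 — 4 statements merged into one kernel-verified Lean document; each statement's English description precedes it below -/
import Mathlib

section
/- Let (x, y) ∈ E × E with max(v₁, w₁)·δ < dist(x, ∂E) and w₁·δ < dist(y, ∂E). If 2(1 − αd) < 4β < min(1/(2d), α − 1/(2d)), then n^{(1−αd)/2} (ĥₙ(x, y) − h(x, y)) → 0 almost surely as n → ∞. -/
open MeasureTheory ProbabilityTheory Filter

noncomputable def iterK {S : Type*} [MeasurableSpace S] (R : S → Measure S) : ℕ → S → Measure S
  | 0, y => Measure.dirac y
  | n+1, y => (iterK R n y).bind R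


lemma aux_sum_rpow (β : ℝ) (h0 : 0 < β) (h1 : β < 1) (m : ℕ) :
    ∑ j ∈ Finset.Icc 1 m, (j:ℝ) ^ (-β) ≤ (m:ℝ) ^ (1 - β) / (1 - β) := by
  induction m with
  | zero => simp [Real.zero_rpow (by linarith : (1 - β) ≠ 0)]
  | succ m ih =>
    rw [Finset.sum_Icc_succ_top (by omega)]
    have hM : (0:ℝ) < (m:ℝ) + 1 := by positivity
    have hB := _root_.rpow_one_add_le_one_add_mul_self (s := -(1 / ((m:ℝ) + 1))) (p := 1 - β)
      (by rw [neg_le_neg_iff, div_le_one hM]; linarith [(Nat.cast_nonneg m : (0:ℝ) ≤ m)])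
      (by linarith) (by linarith)
    have e1 : (1 + -(1 / ((m:ℝ) + 1))) = m / ((m:ℝ) + 1) := by field_simp; ring
    rw [e1, Real.div_rpow (by positivity) hM.le, div_le_iff₀ (by positivity)] at hB
    have e2 : ((m:ℝ) + 1) ^ (1 - β) = ((m:ℝ) + 1) * ((m:ℝ) + 1) ^ (-β) := by
      rw [sub_eq_add_neg, Real.rpow_add hM, Real.rpow_one]
    have hp : (0:ℝ) < 1 - β := by linarith
    rw [le_div_iff₀ hp] at ih ⊢
    push_cast
    rw [e2] at hB ⊢
    have e3 : (1 + (1 - β) * -(1 / ((m:ℝ) + 1))) * (((m:ℝ) + 1) * ((m:ℝ) + 1) ^ (-β))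
      = ((m:ℝ) + 1) * ((m:ℝ) + 1) ^ (-β) - (1 - β) * ((m:ℝ) + 1) ^ (-β) := by
      field_simp; ring
    rw [e3] at hB
    nlinarith

lemma aux_geom (c : ℝ) (h0 : 0 ≤ c) (h1 : c < 1) (m : ℕ) :
    ∑ i ∈ Finset.Icc 1 m, c ^ (m - i) ≤ 1 / (1 - c) := by
  induction m with
  | zero => simp; linarith
  | succ m ih =>
    rw [Finset.sum_Icc_succ_top (by omega)]
    have : ∑ i ∈ Finset.Icc 1 m, c ^ (m + 1 - i) = c * ∑ i ∈ Finset.Icc 1 m, c ^ (m - i) := by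
      rw [Finset.mul_sum]
      refine Finset.sum_congr rfl fun i hi => ?_
      rw [Finset.mem_Icc] at hi
      rw [← pow_succ']; congr 1; omega
    rw [this]
    have hp : (0:ℝ) < 1 - c := by linarith
    have : c * ∑ i ∈ Finset.Icc 1 m, c ^ (m - i) ≤ c * (1 / (1 - c)) := by gcongr
    simp only [Nat.sub_self, pow_zero]
    have e : c * (1 / (1 - c)) + 1 = 1 / (1 - c) := by field_simp; ring
    linarith

/-- second moment bound -/
lemma aux_moment {Ω : Type*} [MeasurableSpace Ω] (P : Measure Ω) [IsProbabilityMeasure P]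
    (X : ℕ → Ω → ℝ) (c L : ℝ) (h0 : 0 ≤ c) (h1 : c < 1) (N : ℕ) (hL : 0 ≤ L)
    (hXX : ∀ i j, 1 ≤ i → 1 ≤ j → Integrable (fun ω => X i ω * X j ω) P)
    (hcov : ∀ i j, 1 ≤ i → i ≤ j → j ≤ N → ∫ ω, X i ω * X j ω ∂P ≤ L * c ^ (j - i)) :
    ∀ m ≤ N, ∫ ω, (∑ j ∈ Finset.Icc 1 m, X j ω) ^ 2 ∂P ≤ m * (2 * L / (1 - c)) := by
  intro m
  have hp : (0:ℝ) < 1 - c := by linarith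
  induction m with
  | zero => intro _; simp
  | succ m ih =>
    intro hm
    have ih := ih (by omega)
    have e : ∀ ω, (∑ j ∈ Finset.Icc 1 (m+1), X j ω) ^ 2 = (∑ j ∈ Finset.Icc 1 m, X j ω) ^ 2
        + (2 * (∑ i ∈ Finset.Icc 1 (m+1), X i ω * X (m+1) ω) - X (m+1) ω * X (m+1) ω) := by
      intro ω
      rw [Finset.sum_Icc_succ_top (by omega), Finset.sum_Icc_succ_top (by omega), ← Finset.sum_mul]; ring
    have i1 : Integrable (fun ω => (∑ j ∈ Finset.Icc 1 m, X j ω) ^ 2) P := by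
      simp_rw [pow_two, Finset.sum_mul_sum]
      refine integrable_finsetSum _ fun i hi => integrable_finsetSum _ fun j hj => ?_
      exact hXX i j (Finset.mem_Icc.1 hi).1 (Finset.mem_Icc.1 hj).1
    have i2 : Integrable (fun ω => ∑ i ∈ Finset.Icc 1 (m+1), X i ω * X (m+1) ω) P :=
      integrable_finsetSum _ fun i hi => hXX i _ (Finset.mem_Icc.1 hi).1 (by omega)
    have i3 := hXX (m+1) (m+1) (by omega) (by omega)
    simp_rw [e]
    have i4 : Integrable (fun ω => 2 * (∑ i ∈ Finset.Icc 1 (m+1), X i ω * X (m+1) ω) - X (m+1) ω * X (m+1) ω) P := (i2.const_mul 2).sub i3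
    rw [integral_add i1 i4, integral_sub (i2.const_mul 2) i3,
      integral_const_mul, integral_finsetSum _ fun i hi => hXX i _ (Finset.mem_Icc.1 hi).1 (by omega)]
    have b1 : ∑ i ∈ Finset.Icc 1 (m+1), ∫ ω, X i ω * X (m+1) ω ∂P ≤ L * (1 / (1 - c)) := by
      calc _ ≤ ∑ i ∈ Finset.Icc 1 (m+1), L * c ^ (m + 1 - i) := Finset.sum_le_sum fun i hi =>
            hcov i _ (Finset.mem_Icc.1 hi).1 (Finset.mem_Icc.1 hi).2 hm
        _ ≤ _ := by rw [← Finset.mul_sum]; gcongr; exact aux_geom c h0 h1 _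
    have b2 : 0 ≤ ∫ ω, X (m+1) ω * X (m+1) ω ∂P := integral_nonneg fun ω => mul_self_nonneg _
    push_cast
    have : ((m:ℝ) + 1) * (2 * L / (1 - c)) = m * (2 * L / (1 - c)) + 2 * (L * (1 / (1 - c))) := by ring
    linarith

lemma aux_layer {S : Type*} [MeasurableSpace S] (μ ν : Measure S) [IsProbabilityMeasure μ]
    [IsProbabilityMeasure ν] (f : S → ℝ) (hf : Measurable f) (C t : ℝ) (h0 : ∀ a, 0 ≤ f a)
    (hC : ∀ a, f a ≤ C) (hC0 : 0 ≤ C) (h : ∀ B, MeasurableSet B → |(μ B).toReal - (ν B).toReal| ≤ t) :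
    |∫ a, f a ∂μ - ∫ a, f a ∂ν| ≤ C * t := by
  have key : ∀ (η : Measure S) [IsProbabilityMeasure η], Integrable f η := fun η _ =>
    Integrable.of_bound hf.aestronglyMeasurable C
      (ae_of_all _ fun a => by rw [Real.norm_eq_abs, abs_of_nonneg (h0 a)]; exact hC a)
  have key2 : ∀ (η : Measure S) [IsProbabilityMeasure η], ∫ a, f a ∂η = ∫ s in Set.Ioc 0 C, η.real {a | s ≤ f a} :=
    fun η _ => (key η).integral_eq_integral_Ioc_meas_le (ae_of_all _ h0) (ae_of_all _ hC)
  have key3 : ∀ (η : Measure S) [IsProbabilityMeasure η], IntegrableOn (fun s => η.real {a | s ≤ f a}) (Set.Ioc 0 C) := by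
    intro η _
    have : Antitone (fun s => η.real {a | s ≤ f a}) := fun s s' hs =>
      measureReal_mono (fun a (ha : s' ≤ f a) => le_trans hs ha)
    exact Integrable.of_bound (this.measurable.aestronglyMeasurable) 1
      (ae_of_all _ fun s => by rw [Real.norm_eq_abs, abs_of_nonneg measureReal_nonneg]; exact measureReal_le_one)
  rw [key2 μ, key2 ν, ← integral_sub (key3 μ) (key3 ν)]
  have := norm_setIntegral_le_of_norm_le_const (μ := volume) (s := Set.Ioc 0 C) (C := t) (f := fun s => μ.real {a | s ≤ f a} - ν.real {a | s ≤ f a}) (by simp)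
    (fun s _ => h _ (measurableSet_le measurable_const hf))
  rw [Real.norm_eq_abs] at this
  refine this.trans ?_
  simp [hC0, mul_comm]

lemma aux_sqrt_tendsto : Tendsto Nat.sqrt atTop atTop := by
  refine tendsto_atTop.2 fun b => ?_
  filter_upwards [eventually_ge_atTop (b * b)] with m hm
  exact Nat.le_sqrt.2 hm

lemma aux_interp (T : ℕ → ℝ) (hT : Monotone T) (h s : ℝ) (hs : 1 / 2 < s)
    (hlim : Tendsto (fun k : ℕ => (T (k ^ 2) - ((k ^ 2 : ℕ) : ℝ) * h) / ((k ^ 2 : ℕ) : ℝ) ^ s) atTop (nhds 0)) :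
    Tendsto (fun m : ℕ => (T m - (m:ℝ) * h) / (m:ℝ) ^ s) atTop (nhds 0) := by
  set U : ℕ → ℝ := fun k : ℕ => (T (k ^ 2) - ((k ^ 2 : ℕ) : ℝ) * h) / ((k ^ 2 : ℕ) : ℝ) ^ s with hU
  have hlim3 : Tendsto (fun k : ℕ => (k:ℝ) ^ (-(2 * s - 1))) atTop (nhds 0) :=
    (tendsto_rpow_neg_atTop (by linarith)).comp tendsto_natCast_atTop_atTop
  have hb : Tendsto (fun k : ℕ => |U k| + 4 ^ s * |U (k + 1)| + 3 * |h| * (k:ℝ) ^ (-(2 * s - 1))) atTop (nhds 0) := by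
    have h1 := hlim.abs
    have h2 := ((tendsto_add_atTop_iff_nat 1).2 hlim).abs
    have := (h1.add (h2.const_mul (4 ^ s))).add (hlim3.const_mul (3 * |h|))
    simpa using this
  refine squeeze_zero_norm' ?_ (hb.comp aux_sqrt_tendsto)
  filter_upwards [eventually_ge_atTop 1] with m hm
  simp only [Function.comp]
  set k := Nat.sqrt m with hk
  have hk1 : 1 ≤ k := Nat.le_sqrt.2 (by omega)
  have hkm : k ^ 2 ≤ m := Nat.sqrt_le' m
  have hmk : m ≤ (k + 1) ^ 2 := (Nat.lt_succ_sqrt' m).le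
  have hk0 : (1:ℝ) ≤ k := by exact_mod_cast hk1
  have hkm' : (k:ℝ) ^ 2 ≤ m := by exact_mod_cast hkm
  have hmk' : (m:ℝ) ≤ ((k:ℝ) + 1) ^ 2 := by exact_mod_cast hmk
  have hm0 : (0:ℝ) < m := by exact_mod_cast hm
  have hA : (0:ℝ) < ((k:ℝ) ^ 2) ^ s := by positivity
  have hA1 : (0:ℝ) < (((k:ℝ) + 1) ^ 2) ^ s := by positivity
  have hAm : ((k:ℝ) ^ 2) ^ s ≤ (m:ℝ) ^ s := Real.rpow_le_rpow (by positivity) hkm' (by linarith)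
  have hA4 : (((k:ℝ) + 1) ^ 2) ^ s ≤ 4 ^ s * ((k:ℝ) ^ 2) ^ s := by
    rw [← Real.mul_rpow (by norm_num) (by positivity)]
    exact Real.rpow_le_rpow (by positivity) (by nlinarith) (by linarith)
  have e0 : |T (k ^ 2) - (k:ℝ) ^ 2 * h| = |U k| * ((k:ℝ) ^ 2) ^ s := by
    simp only [hU]; push_cast
    rw [abs_div, abs_of_pos hA, div_mul_cancel₀ _ hA.ne']
  have e1 : |T ((k + 1) ^ 2) - ((k:ℝ) + 1) ^ 2 * h| = |U (k + 1)| * (((k:ℝ) + 1) ^ 2) ^ s := by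
    simp only [hU]; push_cast
    rw [abs_div, abs_of_pos hA1, div_mul_cancel₀ _ hA1.ne']
  have e3 : (k:ℝ) ^ (-(2 * s - 1)) * ((k:ℝ) ^ 2) ^ s = k := by
    rw [← Real.rpow_natCast, ← Real.rpow_mul (by positivity), ← Real.rpow_add (by linarith)]
    push_cast
    rw [show -(2 * s - 1) + 2 * s = 1 by ring, Real.rpow_one]
  have hmain : |T m - m * h| ≤ |T (k ^ 2) - (k:ℝ) ^ 2 * h| + |T ((k + 1) ^ 2) - ((k:ℝ) + 1) ^ 2 * h| + 3 * |h| * k := by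
    have t1 := hT hkm
    have t2 := hT hmk
    have u1 : |((m:ℝ) - (k:ℝ) ^ 2) * h| ≤ 3 * |h| * k := by
      rw [abs_mul, abs_of_nonneg (by linarith)]
      nlinarith [abs_nonneg h]
    have u2 : |(((k:ℝ) + 1) ^ 2 - m) * h| ≤ 3 * |h| * k := by
      rw [abs_mul, abs_of_nonneg (by linarith)]
      nlinarith [abs_nonneg h]
    have a1 := neg_abs_le (T (k ^ 2) - (k:ℝ) ^ 2 * h)
    have a2 := le_abs_self (T ((k + 1) ^ 2) - ((k:ℝ) + 1) ^ 2 * h)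
    have a3 := abs_nonneg (T (k ^ 2) - (k:ℝ) ^ 2 * h)
    have a4 := abs_nonneg (T ((k + 1) ^ 2) - ((k:ℝ) + 1) ^ 2 * h)
    rw [abs_le] at u1 u2 ⊢
    constructor <;> linarith [u1.1, u1.2, u2.1, u2.2]
  rw [Real.norm_eq_abs, abs_div, abs_of_pos (by positivity : (0:ℝ) < (m:ℝ) ^ s), div_le_iff₀ (by positivity)]
  set BB := |U k| + 4 ^ s * |U (k + 1)| + 3 * |h| * (k:ℝ) ^ (-(2 * s - 1)) with hBB
  have hBB0 : 0 ≤ BB := by positivity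
  calc _ ≤ _ := hmain
    _ ≤ BB * ((k:ℝ) ^ 2) ^ s := by
      rw [e0, e1, hBB, add_mul, add_mul]
      have : |U (k + 1)| * (((k:ℝ) + 1) ^ 2) ^ s ≤ 4 ^ s * |U (k + 1)| * ((k:ℝ) ^ 2) ^ s := by
        calc _ ≤ |U (k + 1)| * (4 ^ s * ((k:ℝ) ^ 2) ^ s) := by gcongr
          _ = _ := by ring
      rw [mul_assoc (3 * |h|), e3]
      linarith
    _ ≤ _ := by gcongr

lemma aux_ae {Ω : Type*} [MeasurableSpace Ω] (P : Measure Ω)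
    (W : ℕ → Ω → ℝ) (hW : ∀ k, Integrable (W k) P) (h0 : ∀ k ω, 0 ≤ W k ω) (u : ℕ → ℝ) (hu : Summable u)
    (hWu : ∀ k, ∫ ω, W k ω ∂P ≤ u k) : ∀ᵐ ω ∂P, Tendsto (fun k => W k ω) atTop (nhds 0) := by
  have h1 : ∑' k, ∫⁻ ω, ENNReal.ofReal (W k ω) ∂P ≠ ⊤ := by
    have : ∀ k, ∫⁻ ω, ENNReal.ofReal (W k ω) ∂P = ENNReal.ofReal (∫ ω, W k ω ∂P) := fun k =>
      (ofReal_integral_eq_lintegral_ofReal (hW k) (ae_of_all _ (h0 k))).symm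
    simp_rw [this]
    have hs : Summable fun k => ∫ ω, W k ω ∂P :=
      Summable.of_nonneg_of_le (fun k => integral_nonneg (h0 k)) hWu hu
    exact hs.tsum_ofReal_ne_top
  have hm : ∀ k, AEMeasurable (fun ω => ENNReal.ofReal (W k ω)) P := fun k =>
    (hW k).aestronglyMeasurable.aemeasurable.ennreal_ofReal
  rw [← lintegral_tsum hm] at h1
  filter_upwards [ae_lt_top' (AEMeasurable.ennreal_tsum hm) h1] with ω hω
  have := ENNReal.tendsto_atTop_zero_of_tsum_ne_top hω.ne
  have := (ENNReal.tendsto_toReal (by simp)).comp this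
  simpa [Function.comp_def, ENNReal.toReal_ofReal, h0] using this
lemma aux_main {Ω : Type*} [MeasurableSpace Ω] (P : Measure Ω) [IsProbabilityMeasure P]
    (Y : ℕ → Ω → ℝ) (hYm : ∀ j, Measurable (Y j)) (hY0 : ∀ j ω, 0 ≤ Y j ω)
    (C a L c C' β s h : ℝ) (hC : 0 ≤ C) (ha : 0 ≤ a) (hL : 0 ≤ L) (hc0 : 0 ≤ c) (hc1 : c < 1)
    (hC' : 0 ≤ C') (hβ0 : 0 < β) (hβ1 : β < 1) (hs1 : 3 / 4 + a < s) (hs2 : 1 - β < s)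
    (hYb : ∀ j, 1 ≤ j → ∀ ω, Y j ω ≤ C * (j:ℝ) ^ a)
    (hcov : ∀ i j, 1 ≤ i → i ≤ j → |∫ ω, Y i ω * Y j ω ∂P - (∫ ω, Y i ω ∂P) * ∫ ω, Y j ω ∂P|
      ≤ L * (i:ℝ) ^ a * (j:ℝ) ^ a * c ^ (j - i))
    (hbias : ∀ j, 1 ≤ j → |∫ ω, Y j ω ∂P - h| ≤ C' * (j:ℝ) ^ (-β)) :
    ∀ᵐ ω ∂P, Tendsto (fun m : ℕ => (∑ j ∈ Finset.Icc 1 m, Y j ω - (m:ℝ) * h) / (m:ℝ) ^ s) atTop (nhds 0) := by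
  set e : ℕ → ℝ := fun j => ∫ ω, Y j ω ∂P with he
  set X : ℕ → Ω → ℝ := fun j ω => Y j ω - e j with hX
  have hp : (0:ℝ) < 1 - c := by linarith
  have hYi : ∀ j, 1 ≤ j → Integrable (Y j) P := fun j hj =>
    Integrable.of_bound (hYm j).aestronglyMeasurable (C * (j:ℝ) ^ a)
      (ae_of_all _ fun ω => by rw [Real.norm_eq_abs, abs_of_nonneg (hY0 j ω)]; exact hYb j hj ω)
  have hYY : ∀ i j, 1 ≤ i → 1 ≤ j → Integrable (fun ω => Y i ω * Y j ω) P := fun i j hi hj =>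
    Integrable.of_bound ((hYm i).mul (hYm j)).aestronglyMeasurable ((C * (i:ℝ) ^ a) * (C * (j:ℝ) ^ a))
      (ae_of_all _ fun ω => by
        rw [Real.norm_eq_abs, abs_of_nonneg (mul_nonneg (hY0 i ω) (hY0 j ω))]
        exact mul_le_mul (hYb i hi ω) (hYb j hj ω) (hY0 j ω) (by positivity))
  have hXe : ∀ i j, (fun ω => X i ω * X j ω) = fun ω => Y i ω * Y j ω - (e i * Y j ω + e j * Y i ω - e i * e j) := by
    intro i j; funext ω; simp only [hX]; ring
  have hXR : ∀ i j, 1 ≤ i → 1 ≤ j → Integrable (fun ω => e i * Y j ω + e j * Y i ω - e i * e j) P := fun i j hi hj =>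
    (((hYi j hj).const_mul _).add ((hYi i hi).const_mul _)).sub (integrable_const _)
  have hXX : ∀ i j, 1 ≤ i → 1 ≤ j → Integrable (fun ω => X i ω * X j ω) P := fun i j hi hj => by
    rw [hXe]; exact (hYY i j hi hj).sub (hXR i j hi hj)
  have hXint : ∀ i j, 1 ≤ i → 1 ≤ j → ∫ ω, X i ω * X j ω ∂P = ∫ ω, Y i ω * Y j ω ∂P - e i * e j := by
    intro i j hi hj
    have i1 : Integrable (fun ω => e i * Y j ω + e j * Y i ω) P :=
      ((hYi j hj).const_mul _).add ((hYi i hi).const_mul _)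
    rw [hXe, integral_sub (hYY i j hi hj) (hXR i j hi hj), integral_sub i1 (integrable_const _),
      integral_add ((hYi j hj).const_mul _) ((hYi i hi).const_mul _), integral_const_mul, integral_const_mul]
    simp [he]; ring
  have hmom : ∀ N : ℕ, ∫ ω, (∑ j ∈ Finset.Icc 1 N, X j ω) ^ 2 ∂P ≤ N * (2 * (L * (N:ℝ) ^ a * (N:ℝ) ^ a) / (1 - c)) := by
    intro N
    refine aux_moment P X c _ hc0 hc1 N (by positivity) hXX ?_ N le_rfl
    intro i j hi hij hjN
    rw [hXint i j hi (by omega)]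
    refine (le_abs_self _).trans ((hcov i j hi hij).trans ?_)
    have : i ≤ N := by omega
    gcongr
  have hsum : Summable fun k : ℕ => (2 * L / (1 - c)) * (k:ℝ) ^ (2 + 4 * a - 4 * s) := by
    refine (Real.summable_nat_rpow.2 (by linarith)).mul_left _
  have hXsq : ∀ N : ℕ, Integrable (fun ω => (∑ j ∈ Finset.Icc 1 N, X j ω) ^ 2) P := by
    intro N
    simp_rw [pow_two, Finset.sum_mul_sum]
    refine integrable_finsetSum _ fun i hi => integrable_finsetSum _ fun j hj => ?_
    exact hXX i j (Finset.mem_Icc.1 hi).1 (Finset.mem_Icc.1 hj).1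
  have hae := aux_ae P (fun k ω => (∑ j ∈ Finset.Icc 1 (k ^ 2), X j ω) ^ 2 / (((k ^ 2 : ℕ) : ℝ) ^ s) ^ 2)
    (fun k => (hXsq _).div_const _) (fun k ω => by positivity) _ hsum (by
      intro k
      rw [integral_div]
      rcases Nat.eq_zero_or_pos k with rfl | hk
      · simp only [ne_eq, OfNat.ofNat_ne_zero, not_false_eq_true, zero_pow, Nat.cast_zero]
        simp
        positivity
      have hk0 : (0:ℝ) < k := by exact_mod_cast hk
      have q1 : ∀ z : ℝ, ((k:ℝ) ^ 2) ^ z = (k:ℝ) ^ (2 * z) := fun z => by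
        rw [← Real.rpow_natCast, ← Real.rpow_mul hk0.le]; norm_num
      have hm := hmom (k ^ 2)
      push_cast at hm ⊢
      rw [div_le_iff₀ (by positivity)]
      refine hm.trans (le_of_eq ?_)
      simp only [q1]
      rw [← Real.rpow_natCast ((k:ℝ) ^ (2 * s)), ← Real.rpow_mul hk0.le, mul_assoc (2 * L / (1 - c)), ← Real.rpow_add hk0,
        show 2 + 4 * a - 4 * s + 2 * s * ((2:ℕ):ℝ) = ((2:ℕ):ℝ) + 2 * a + 2 * a by push_cast; ring, Real.rpow_add hk0, Real.rpow_add hk0,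
        Real.rpow_natCast]
      ring)
  have hmean : Tendsto (fun m : ℕ => (∑ j ∈ Finset.Icc 1 m, (e j - h)) / (m:ℝ) ^ s) atTop (nhds 0) := by
    have hl : Tendsto (fun m : ℕ => C' / (1 - β) * (m:ℝ) ^ (-(s - (1 - β)))) atTop (nhds 0) := by
      have := ((tendsto_rpow_neg_atTop (y := s - (1 - β)) (by linarith)).comp tendsto_natCast_atTop_atTop).const_mul (C' / (1 - β))
      simpa [Function.comp_def] using this
    refine squeeze_zero_norm' ?_ hl
    filter_upwards [eventually_ge_atTop 1] with m hm
    have hm0 : (0:ℝ) < m := by exact_mod_cast hm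
    rw [Real.norm_eq_abs, abs_div, abs_of_pos (by positivity : (0:ℝ) < (m:ℝ) ^ s), div_le_iff₀ (by positivity),
      mul_assoc, ← Real.rpow_add hm0, show -(s - (1 - β)) + s = 1 - β by ring]
    calc _ ≤ ∑ j ∈ Finset.Icc 1 m, |e j - h| := Finset.abs_sum_le_sum_abs _ _
      _ ≤ ∑ j ∈ Finset.Icc 1 m, C' * (j:ℝ) ^ (-β) := Finset.sum_le_sum fun j hj => hbias j (Finset.mem_Icc.1 hj).1
      _ ≤ C' * ((m:ℝ) ^ (1 - β) / (1 - β)) := by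
        rw [← Finset.mul_sum]; gcongr; exact aux_sum_rpow β hβ0 hβ1 m
      _ = _ := by ring
  filter_upwards [hae] with ω hω
  refine aux_interp (fun m => ∑ j ∈ Finset.Icc 1 m, Y j ω) ?_ h s (by linarith) ?_
  · intro m n hmn
    exact Finset.sum_le_sum_of_subset_of_nonneg (Finset.Icc_subset_Icc_right hmn) fun j _ _ => hY0 j ω
  · have h1 : Tendsto (fun k : ℕ => (∑ j ∈ Finset.Icc 1 (k ^ 2), X j ω) / ((k ^ 2 : ℕ) : ℝ) ^ s) atTop (nhds 0) := by
      have := hω.sqrt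
      simp only [← div_pow, Real.sqrt_sq_eq_abs, Real.sqrt_zero] at this
      exact (tendsto_zero_iff_abs_tendsto_zero _).2 this
    have h2 := hmean.comp (tendsto_pow_atTop (α := ℕ) (n := 2) (by norm_num))
    have h3 := h1.add h2
    rw [add_zero] at h3
    refine h3.congr fun k => ?_
    simp only [Function.comp, hX]
    rw [← add_div]
    congr 1
    rw [← Finset.sum_add_distrib]
    simp [Finset.sum_sub_distrib]

lemma aux_ball {d : ℕ} (E : Set (EuclideanSpace ℝ (Fin d))) (hE : IsOpen E)
    (x : EuclideanSpace ℝ (Fin d)) (hx : x ∈ E) (t : ℝ) (ht : 0 < t) (h : t ≤ Metric.infDist x (frontier E)) :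
    Metric.ball x t ⊆ E := by
  refine (convex_ball x t).isPreconnected.subset_of_closure_inter_subset hE ⟨x, Metric.mem_ball_self ht, hx⟩ ?_
  rintro z ⟨hz, hzb⟩
  by_contra hzE
  have hf : z ∈ frontier E := by rw [hE.frontier_eq]; exact ⟨hz, hzE⟩
  have := Metric.infDist_le_dist_of_mem (x := x) hf
  rw [Metric.mem_ball, dist_comm] at hzb
  linarith

lemma aux_approx {d : ℕ} (K : EuclideanSpace ℝ (Fin d) → ℝ) (hKmeas : Measurable K) (hKnonneg : ∀ z, 0 ≤ K z)
    (hKint : ∫ z, K z ∂volume = 1)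
    (δ : ℝ) (hδ : 0 < δ) (hKsupp : Function.support K ⊆ Metric.ball 0 δ)
    (w : ℝ) (hw : 0 < w) (y : EuclideanSpace ℝ (Fin d)) (φ : EuclideanSpace ℝ (Fin d) → ℝ) (hφ : Measurable φ)
    (L : ℝ) (hL : 0 ≤ L) (hlip : ∀ u ∈ Metric.ball y (w * δ), |φ u - φ y| ≤ L * dist u y) :
    (∀ u, u ∉ Metric.ball y (w * δ) → K (w⁻¹ • (u - y)) = 0) ∧
    Integrable (fun u => (w ^ d)⁻¹ * K (w⁻¹ • (u - y))) ∧ ∫ u, (w ^ d)⁻¹ * K (w⁻¹ • (u - y)) = 1 ∧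
    Integrable (fun u => (w ^ d)⁻¹ * K (w⁻¹ • (u - y)) * φ u) ∧
    |(∫ u, (w ^ d)⁻¹ * K (w⁻¹ • (u - y)) * φ u) - φ y| ≤ L * (w * δ) := by
  have hsupp : ∀ u, u ∉ Metric.ball y (w * δ) → K (w⁻¹ • (u - y)) = 0 := by
    intro u hu
    by_contra hne
    apply hu
    have := hKsupp hne
    rw [mem_ball_zero_iff, norm_smul, Real.norm_eq_abs, abs_of_pos (by positivity), inv_mul_lt_iff₀ hw] at this
    rwa [Metric.mem_ball, dist_eq_norm]
  have hKi : Integrable K volume := by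
    by_contra hne
    rw [integral_undef hne] at hKint
    exact zero_ne_one hKint
  have hi : Integrable (fun u => (w ^ d)⁻¹ * K (w⁻¹ • (u - y))) := by
    have := (hKi.comp_smul (inv_ne_zero hw.ne')).comp_sub_right y
    exact this.const_mul _
  have hone : ∫ u, (w ^ d)⁻¹ * K (w⁻¹ • (u - y)) = 1 := by
    rw [integral_const_mul, integral_sub_right_eq_self (fun u => K (w⁻¹ • u)) y,
      Measure.integral_comp_inv_smul_of_nonneg volume K hw.le, hKint]
    simp
    field_simp
  set k : EuclideanSpace ℝ (Fin d) → ℝ := fun u => (w ^ d)⁻¹ * K (w⁻¹ • (u - y)) with hk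
  have hk0 : ∀ u, 0 ≤ k u := fun u => mul_nonneg (by positivity) (hKnonneg _)
  have hkm : Measurable k := by
    have : Measurable (fun u : EuclideanSpace ℝ (Fin d) => w⁻¹ • (u - y)) := by fun_prop
    exact (hKmeas.comp this).const_mul _
  have hpt : ∀ u, ‖k u * (φ u - φ y)‖ ≤ k u * (L * (w * δ)) := by
    intro u
    by_cases hu : u ∈ Metric.ball y (w * δ)
    · rw [norm_mul, Real.norm_eq_abs, Real.norm_eq_abs, abs_of_nonneg (hk0 u)]
      refine mul_le_mul_of_nonneg_left ((hlip u hu).trans ?_) (hk0 u)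
      exact mul_le_mul_of_nonneg_left (Metric.mem_ball.1 hu).le hL
    · simp [hk, hsupp u hu]
  have hkφ : Integrable (fun u => k u * (φ u - φ y)) :=
    (hi.mul_const _).mono' (hkm.mul (hφ.sub_const _)).aestronglyMeasurable (ae_of_all _ hpt)
  have hsplit : (fun u => k u * φ u) = fun u => k u * (φ u - φ y) + k u * φ y := by funext u; ring
  have hint2 : Integrable (fun u => k u * φ u) := by rw [hsplit]; exact hkφ.add (hi.mul_const _)
  refine ⟨hsupp, hi, hone, hint2, ?_⟩
  change |(∫ u, k u * φ u) - φ y| ≤ _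
  rw [hsplit, integral_add hkφ (hi.mul_const _), integral_mul_const, hone, one_mul, add_sub_cancel_right,
    ← Real.norm_eq_abs]
  refine (norm_integral_le_of_norm_le (hi.mul_const _) (ae_of_all _ hpt)).trans ?_
  rw [integral_mul_const, hone, one_mul]

lemma aux_density {d : ℕ} (E : Set (EuclideanSpace ℝ (Fin d))) (hEopen : IsOpen E)
    (R : (EuclideanSpace ℝ (Fin d)) → Measure (EuclideanSpace ℝ (Fin d)))
    (hR : Measurable R)
    (r : (EuclideanSpace ℝ (Fin d)) → (EuclideanSpace ℝ (Fin d)) → ℝ) (hrmeas : Measurable (Function.uncurry r)) (hrnonneg : ∀ a b, 0 ≤ r a b)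
    (Cr : ℝ) (hrbdd : ∀ a b, r a b ≤ Cr)
    (hRdens : ∀ ξ ∈ closure E, ∀ B : Set (EuclideanSpace ℝ (Fin d)), B ⊆ E → MeasurableSet B →
      R ξ B = ∫⁻ z in B, ENNReal.ofReal (r ξ z) ∂volume)
    (m : Measure (EuclideanSpace ℝ (Fin d))) [IsProbabilityMeasure m] (hm : ∀ᵐ ξ ∂m, ξ ∈ closure E)
    (g : EuclideanSpace ℝ (Fin d) → ℝ) (hg : ∀ z, z ∉ E → g z = 0) :
    Measurable (fun z => ∫ u, r u z ∂m) ∧ 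
    ∫ z, g z ∂(m.bind R) = ∫ z, g z * ∫ u, r u z ∂m := by
  have hfm : Measurable (fun z => ∫ u, r u z ∂m) := by
    have : StronglyMeasurable (Function.uncurry fun z u => r u z) :=
      (hrmeas.comp measurable_swap).stronglyMeasurable
    exact this.integral_prod_right.measurable
  have hri : ∀ z, Integrable (fun u => r u z) m := fun z =>
    Integrable.of_bound (hrmeas.comp (measurable_id.prodMk measurable_const)).aestronglyMeasurable Cr
      (ae_of_all _ fun u => by rw [Real.norm_eq_abs, abs_of_nonneg (hrnonneg _ _)]; exact hrbdd _ _)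
  refine ⟨hfm, ?_⟩
  have hrestr : (m.bind R).restrict E = (volume.withDensity (fun z => ENNReal.ofReal (∫ u, r u z ∂m))).restrict E := by
    ext B hB
    have hBE : MeasurableSet (B ∩ E) := hB.inter hEopen.measurableSet
    rw [Measure.restrict_apply hB, Measure.restrict_apply hB, Measure.bind_apply hBE hR.aemeasurable,
      withDensity_apply _ hBE]
    have : ∫⁻ ξ, R ξ (B ∩ E) ∂m = ∫⁻ ξ, ∫⁻ z in B ∩ E, ENNReal.ofReal (r ξ z) ∂volume ∂m :=
      lintegral_congr_ae (hm.mono fun ξ hξ => hRdens ξ hξ _ Set.inter_subset_right hBE)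
    rw [this, lintegral_lintegral_swap]
    · refine lintegral_congr fun z => ?_
      rw [ofReal_integral_eq_lintegral_ofReal (hri z) (ae_of_all _ fun u => hrnonneg u z)]
    · exact (hrmeas.ennreal_ofReal).aemeasurable
  rw [← setIntegral_eq_integral_of_forall_compl_eq_zero (s := E) (μ := m.bind R) hg, hrestr,
    setIntegral_withDensity_eq_setIntegral_toReal_smul hfm.ennreal_ofReal (by simp) _ hEopen.measurableSet,
    ← setIntegral_eq_integral_of_forall_compl_eq_zero (s := E) (μ := volume)]
  · refine integral_congr_ae (ae_of_all _ fun z => ?_)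
    simp only [smul_eq_mul]
    rw [ENNReal.toReal_ofReal (integral_nonneg fun u => hrnonneg u z), mul_comm]
  · intro z hz; rw [hg z hz, zero_mul]

lemma aux_iter_meas {S : Type*} [MeasurableSpace S] (R : S → Measure S) (hR : Measurable R) (n : ℕ) :
    Measurable (iterK R n) := by
  induction n with
  | zero => exact Measure.measurable_dirac
  | succ n ih => exact (Measure.measurable_bind' hR).comp ih

lemma aux_iter_prob {S : Type*} [MeasurableSpace S] (R : S → Measure S) (hR : Measurable R)
    (hp : ∀ ξ, IsProbabilityMeasure (R ξ)) (n : ℕ) (ξ : S) : IsProbabilityMeasure (iterK R n ξ) := by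
  induction n with
  | zero => exact Measure.dirac.isProbabilityMeasure
  | succ n ih =>
    constructor
    change (iterK R n ξ).bind R Set.univ = 1
    rw [Measure.bind_apply MeasurableSet.univ hR.aemeasurable]
    simp

lemma aux_iter_law {S : Type*} [MeasurableSpace S] (R : S → Measure S) (hR : Measurable R)
    (m : ℕ → Measure S) (hm : ∀ n, 1 ≤ n → m (n+1) = (m n).bind R) (n : ℕ) :
    m (n + 1) = (m 1).bind (iterK R n) := by
  induction n with
  | zero =>
    change m 1 = (m 1).bind Measure.dirac
    rw [Measure.bind_dirac]
  | succ n ih =>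
    rw [hm (n+1) (by omega), ih, Measure.bind_bind (aux_iter_meas R hR n).aemeasurable hR.aemeasurable]
    rfl

lemma aux_TV {S : Type*} [MeasurableSpace S] (R : S → Measure S) (hR : Measurable R)
    (hp : ∀ ξ, IsProbabilityMeasure (R ξ)) (m1 π : Measure S) [IsProbabilityMeasure m1] [IsProbabilityMeasure π]
    (A : Set S) (hA : ∀ᵐ ξ ∂m1, ξ ∈ A) (n : ℕ) (t : ℝ) (B : Set S) (hB : MeasurableSet B)
    (h : ∀ ξ ∈ A, |(iterK R n ξ B).toReal - (π B).toReal| ≤ t) :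
    |((m1.bind (iterK R n)) B).toReal - (π B).toReal| ≤ t := by
  have hpi := aux_iter_prob R hR hp n
  have hmeas : Measurable fun ξ => iterK R n ξ B := (Measure.measurable_coe hB).comp (aux_iter_meas R hR n)
  have e : ((m1.bind (iterK R n)) B).toReal = ∫ ξ, (iterK R n ξ B).toReal ∂m1 := by
    rw [Measure.bind_apply hB (aux_iter_meas R hR n).aemeasurable,
      integral_toReal hmeas.aemeasurable (ae_of_all _ fun ξ => measure_lt_top _ _)]
  have hi : Integrable (fun ξ => (iterK R n ξ B).toReal) m1 :=
    Integrable.of_bound hmeas.ennreal_toReal.aestronglyMeasurable 1 (ae_of_all _ fun ξ => by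
      rw [Real.norm_eq_abs, abs_of_nonneg ENNReal.toReal_nonneg]; exact measureReal_le_one)
  have e2 : ∫ ξ, (iterK R n ξ B).toReal ∂m1 - (π B).toReal = ∫ ξ, ((iterK R n ξ B).toReal - (π B).toReal) ∂m1 := by
    rw [integral_sub hi (integrable_const _)]; simp
  rw [e, e2]
  have := norm_integral_le_of_norm_le_const (f := fun ξ => (iterK R n ξ B).toReal - (π B).toReal) (C := t) (hA.mono fun ξ hξ => h ξ hξ)
  simpa using this

lemma aux_law {S Ω : Type*} [MeasurableSpace S] (F : MeasurableSpace Ω) [mΩ : MeasurableSpace Ω] (P : Measure Ω) [IsProbabilityMeasure P]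
    (X X' : Ω → S) (hX : Measurable X) (hX' : Measurable X') (R : S → Measure S) (hR : Measurable R)
    (hRprob : ∀ ξ, IsProbabilityMeasure (R ξ)) (hF : F ≤ mΩ)
    (h : ∀ g : S → ℝ, Measurable g → (∃ C, ∀ u, |g u| ≤ C) →
      P[fun ω => g (X' ω)|F] =ᵐ[P] fun ω => ∫ u, g u ∂(R (X ω))) :
    P.map X' = (P.map X).bind R := by
  ext B hB
  have hm : Measurable fun ξ => R ξ B := (Measure.measurable_coe hB).comp hR
  rw [Measure.bind_apply hB hR.aemeasurable, lintegral_map hm hX, Measure.map_apply hX' hB]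
  have h1 := h (B.indicator 1) (measurable_one.indicator hB) ⟨1, fun u => by
    by_cases hu : u ∈ B <;> simp [hu]⟩
  have h2 := integral_condExp (μ := P) (f := fun ω => B.indicator (1 : S → ℝ) (X' ω)) hF
  rw [integral_congr_ae h1] at h2
  have e1 : ∀ ω, ∫ u, B.indicator (1 : S → ℝ) u ∂(R (X ω)) = (R (X ω) B).toReal := fun ω => by
    rw [integral_indicator_one hB]; rfl
  have e2 : ∫ ω, B.indicator (1 : S → ℝ) (X' ω) ∂P = (P (X' ⁻¹' B)).toReal := by
    rw [← Measure.real, ← integral_indicator_one (hX' hB)]; rfl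
  simp_rw [e1] at h2
  have hmX : Measurable (fun ω => R (X ω) B) := hm.comp hX
  rw [e2, integral_toReal hmX.aemeasurable (ae_of_all _ fun ω => measure_lt_top _ _)] at h2
  refine ((ENNReal.toReal_eq_toReal_iff' ?_ (measure_ne_top _ _)).1 h2).symm
  have : ∫⁻ ω, R (X ω) B ∂P ≤ ∫⁻ ω, 1 ∂P := lintegral_mono fun ω => prob_le_one
  exact ne_top_of_le_ne_top (by simp) this

lemma aux_joint {S Ω : Type*} [MeasurableSpace S] (F : MeasurableSpace Ω) [mΩ : MeasurableSpace Ω] (P : Measure Ω) [IsProbabilityMeasure P]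
    (X X' : Ω → S) (hX' : Measurable X') (Q : S → Measure S)
    (hF : F ≤ mΩ) (hXF : Measurable[F] X)
    (g G : S → ℝ) (hg : Measurable g) (hG : Measurable G) (C : ℝ) (hgC : ∀ u, |g u| ≤ C) (hGC : ∀ u, |G u| ≤ C)
    (h : P[fun ω => g (X' ω)|F] =ᵐ[P] fun ω => ∫ u, g u ∂(Q (X ω))) :
    ∫ ω, G (X ω) * g (X' ω) ∂P = ∫ ω, G (X ω) * ∫ u, g u ∂(Q (X ω)) ∂P := by
  have hgi : Integrable (fun ω => g (X' ω)) P :=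
    Integrable.of_bound (hg.comp hX').aestronglyMeasurable C (ae_of_all _ fun ω => hgC _)
  have h1 := condExp_stronglyMeasurable_mul_of_bound (μ := P) hF (f := fun ω => G (X ω)) (g := fun ω => g (X' ω))
    (hG.comp hXF).stronglyMeasurable hgi C (ae_of_all _ fun ω => hGC _)
  have h2 := integral_condExp (μ := P) (f := (fun ω => G (X ω)) * fun ω => g (X' ω)) hF
  rw [integral_congr_ae h1] at h2
  change _ = ∫ ω, G (X ω) * g (X' ω) ∂P at h2
  rw [← h2]
  refine integral_congr_ae ?_
  filter_upwards [h] with ω hω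
  simp [hω]

lemma aux_Q {d : ℕ} (Q : Measure (EuclideanSpace ℝ (Fin d))) (q : EuclideanSpace ℝ (Fin d) → ℝ) (hq : Measurable q)
    (hq0 : ∀ z, 0 ≤ q z)
    (hQ : ∀ B, MeasurableSet B → Q B = ∫⁻ z in B, ENNReal.ofReal (q z) ∂volume) (g : EuclideanSpace ℝ (Fin d) → ℝ) :
    ∫ u, g u ∂Q = ∫ u, g u * q u := by
  have : Q = volume.withDensity (fun z => ENNReal.ofReal (q z)) := by
    ext B hB; rw [hQ B hB, withDensity_apply _ hB]
  rw [this, integral_withDensity_eq_integral_toReal_smul hq.ennreal_ofReal (by simp)]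
  refine integral_congr_ae (ae_of_all _ fun z => ?_)
  simp [ENNReal.toReal_ofReal (hq0 z), mul_comm]

/-- bias bound -/
lemma aux_bias {d : ℕ} {Ω : Type*} (F : MeasurableSpace Ω) [mΩ : MeasurableSpace Ω] (P : Measure Ω) [IsProbabilityMeasure P]
    (E : Set (EuclideanSpace ℝ (Fin d))) (hEopen : IsOpen E)
    (X X' : Ω → EuclideanSpace ℝ (Fin d)) (hX : Measurable X) (hX' : Measurable X')
    (R : (EuclideanSpace ℝ (Fin d)) → Measure (EuclideanSpace ℝ (Fin d)))
    (hR : Measurable R)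
    (r : (EuclideanSpace ℝ (Fin d)) → (EuclideanSpace ℝ (Fin d)) → ℝ) (hrmeas : Measurable (Function.uncurry r)) (hrnonneg : ∀ a b, 0 ≤ r a b)
    (Cr : ℝ) (hrbdd : ∀ a b, r a b ≤ Cr)
    (rLip : ℝ) (hrLip0 : 0 ≤ rLip) (hrLip : ∀ a : (EuclideanSpace ℝ (Fin d)), ∀ b ∈ E, ∀ b' ∈ E, |r a b' - r a b| ≤ rLip * dist b' b)
    (hRdens : ∀ ξ ∈ closure E, ∀ B : Set (EuclideanSpace ℝ (Fin d)), B ⊆ E → MeasurableSet B →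
      R ξ B = ∫⁻ z in B, ENNReal.ofReal (r ξ z) ∂volume)
    (m : Measure (EuclideanSpace ℝ (Fin d))) [IsProbabilityMeasure m] (hm : ∀ᵐ ξ ∂m, ξ ∈ closure E)
    (hlaw : P.map X = m.bind R)
    (K : (EuclideanSpace ℝ (Fin d)) → ℝ) (hKmeas : Measurable K) (hKnonneg : ∀ z, 0 ≤ K z)
    (CK : ℝ) (hKbdd : ∀ z, K z ≤ CK) (hKint : ∫ z, K z ∂volume = 1)
    (δ : ℝ) (hδ : 0 < δ) (hKsupp : Function.support K ⊆ Metric.ball 0 δ)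
    (Qm : (EuclideanSpace ℝ (Fin d)) → Measure (EuclideanSpace ℝ (Fin d)))
    (q : (EuclideanSpace ℝ (Fin d)) → (EuclideanSpace ℝ (Fin d)) → ℝ) (hqmeas : Measurable (Function.uncurry q)) (hqnonneg : ∀ a b, 0 ≤ q a b)
    (Cq : ℝ) (hqbdd : ∀ a b, q a b ≤ Cq)
    (qLip : ℝ) (hqLip0 : 0 ≤ qLip) (hqLip1 : ∀ a b b' : (EuclideanSpace ℝ (Fin d)), |q a b' - q a b| ≤ qLip * dist b' b)
    (hqLip2 : ∀ a a' b : (EuclideanSpace ℝ (Fin d)), |q a' b - q a b| ≤ qLip * dist a' a)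
    (hQdens : ∀ ξ : (EuclideanSpace ℝ (Fin d)), ∀ B : Set (EuclideanSpace ℝ (Fin d)), MeasurableSet B →
      Qm ξ B = ∫⁻ z in B, ENNReal.ofReal (q ξ z) ∂volume)
    (hF : F ≤ mΩ) (hXF : Measurable[F] X)
    (hcond : ∀ g : (EuclideanSpace ℝ (Fin d)) → ℝ, Measurable g → (∃ C, ∀ u, |g u| ≤ C) →
      P[fun ω => g (X' ω)|F] =ᵐ[P] fun ω => ∫ u, g u ∂(Qm (X ω)))
    (w : ℝ) (hw : 0 < w) (x y : EuclideanSpace ℝ (Fin d)) (hx : x ∈ E) (hball : Metric.ball x (w * δ) ⊆ E) :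
    |∫ ω, (w ^ (2*d))⁻¹ * (K (w⁻¹ • (X ω - x)) * K (w⁻¹ • (X' ω - y))) ∂P - (∫ u, r u x ∂m) * q x y|
      ≤ (Cr * qLip + (Cq * rLip + Cr * qLip)) * (w * δ) := by
  have hCr : 0 ≤ Cr := (hrnonneg x x).trans (hrbdd x x)
  have hCq : 0 ≤ Cq := (hqnonneg x x).trans (hqbdd x x)
  have hCK : 0 ≤ CK := (hKnonneg x).trans (hKbdd x)
  have hwδ : 0 < w * δ := by positivity
  set kx : EuclideanSpace ℝ (Fin d) → ℝ := fun u => (w ^ d)⁻¹ * K (w⁻¹ • (u - x)) with hkx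
  set ky : EuclideanSpace ℝ (Fin d) → ℝ := fun u => (w ^ d)⁻¹ * K (w⁻¹ • (u - y)) with hky
  have hkm : ∀ z : EuclideanSpace ℝ (Fin d), Measurable (fun u : EuclideanSpace ℝ (Fin d) => (w ^ d)⁻¹ * K (w⁻¹ • (u - z))) := by
    intro z
    have : Measurable (fun u : EuclideanSpace ℝ (Fin d) => w⁻¹ • (u - z)) := by fun_prop
    exact (hKmeas.comp this).const_mul _
  have hk0 : ∀ z u : EuclideanSpace ℝ (Fin d), 0 ≤ (w ^ d)⁻¹ * K (w⁻¹ • (u - z)) := fun z u =>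
    mul_nonneg (by positivity) (hKnonneg _)
  have hkb : ∀ z u : EuclideanSpace ℝ (Fin d), |(w ^ d)⁻¹ * K (w⁻¹ • (u - z))| ≤ (w ^ d)⁻¹ * CK := fun z u => by
    rw [abs_of_nonneg (hk0 z u)]; exact mul_le_mul_of_nonneg_left (hKbdd _) (by positivity)
  have hqm1 : ∀ ξ, Measurable (q ξ) := fun ξ => hqmeas.comp (measurable_const.prodMk measurable_id)
  have hqm2 : Measurable (fun ξ => q ξ y) := hqmeas.comp (measurable_id.prodMk measurable_const)
  -- step a
  have ea : ∫ ω, (w ^ (2*d))⁻¹ * (K (w⁻¹ • (X ω - x)) * K (w⁻¹ • (X' ω - y))) ∂P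
      = ∫ ω, kx (X ω) * ∫ u, ky u ∂(Qm (X ω)) ∂P := by
    rw [← aux_joint F P X X' hX' Qm hF hXF ky kx (hkm y) (hkm x) _ (hkb y) (hkb x)
      (hcond ky (hkm y) ⟨_, hkb y⟩)]
    refine integral_congr_ae (ae_of_all _ fun ω => ?_)
    simp only [hkx, hky]
    rw [show 2 * d = d + d by ring, pow_add, mul_inv]; ring
  set ψ : EuclideanSpace ℝ (Fin d) → ℝ := fun ξ => ∫ u, ky u * q ξ u with hψ
  have hQψ : ∀ ξ, ∫ u, ky u ∂(Qm ξ) = ψ ξ := fun ξ =>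
    aux_Q (Qm ξ) (q ξ) (hqm1 ξ) (hqnonneg ξ) (hQdens ξ) ky
  have hψm : Measurable ψ := by
    have : StronglyMeasurable (Function.uncurry fun ξ u => ky u * q ξ u) :=
      (((hkm y).comp measurable_snd).mul hqmeas).stronglyMeasurable
    exact this.integral_prod_right.measurable
  have hψq : ∀ ξ, |ψ ξ - q ξ y| ≤ qLip * (w * δ) := fun ξ =>
    (aux_approx K hKmeas hKnonneg hKint δ hδ hKsupp w hw y (q ξ) (hqm1 ξ) qLip hqLip0
      (fun u _ => hqLip1 ξ y u)).2.2.2.2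
  -- density
  set f : EuclideanSpace ℝ (Fin d) → ℝ := fun z => ∫ u, r u z ∂m with hf
  have hri : ∀ z, Integrable (fun u => r u z) m := fun z =>
    Integrable.of_bound (hrmeas.comp (measurable_id.prodMk measurable_const)).aestronglyMeasurable Cr
      (ae_of_all _ fun u => by rw [Real.norm_eq_abs, abs_of_nonneg (hrnonneg _ _)]; exact hrbdd _ _)
  have hf0 : ∀ z, 0 ≤ f z := fun z => integral_nonneg fun u => hrnonneg u z
  have hfC : ∀ z, f z ≤ Cr := fun z => by
    have := integral_mono (hri z) (integrable_const Cr) (fun u => hrbdd u z)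
    simpa using this
  have hfm : Measurable f := (aux_density E hEopen R hR r hrmeas hrnonneg Cr hrbdd hRdens m hm (fun _ => 0) (fun _ _ => rfl)).1
  have hfL : ∀ z ∈ E, |f z - f x| ≤ rLip * dist z x := by
    intro z hz
    simp only [hf]
    rw [← integral_sub (hri z) (hri x), ← Real.norm_eq_abs]
    have := norm_integral_le_of_norm_le_const (μ := m) (f := fun u => r u z - r u x) (C := rLip * dist z x)
      (ae_of_all _ fun u => hrLip u x hx z hz)
    simpa using this
  obtain ⟨hsx, hix, hone, -, -⟩ := aux_approx K hKmeas hKnonneg hKint δ hδ hKsupp w hw x (fun _ => 0) measurable_const 0 le_rfl (by simp)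
  have hdens : ∀ g : EuclideanSpace ℝ (Fin d) → ℝ, Measurable g → ∫ ω, kx (X ω) * g (X ω) ∂P = ∫ z, kx z * g z * f z := by
    intro g hg
    have hmm : Measurable (fun z => kx z * g z) := (hkm x).mul hg
    rw [← (aux_density E hEopen R hR r hrmeas hrnonneg Cr hrbdd hRdens m hm (fun z => kx z * g z) (by
      intro z hz
      have : z ∉ Metric.ball x (w * δ) := fun h => hz (hball h)
      simp [hkx, hsx z this])).2, ← hlaw, integral_map hX.aemeasurable hmm.aestronglyMeasurable]
  -- second comparison
  have hφ := (aux_approx K hKmeas hKnonneg hKint δ hδ hKsupp w hw x (fun z => q z y * f z) (hqm2.mul hfm)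
    (Cq * rLip + Cr * qLip) (by positivity) (by
      intro u hu
      have : q u y * f u - q x y * f x = q u y * (f u - f x) + (q u y - q x y) * f x := by ring
      rw [this]
      refine (abs_add_le _ _).trans ?_
      rw [abs_mul, abs_mul, abs_of_nonneg (hqnonneg _ _), abs_of_nonneg (hf0 x)]
      have h1 := mul_le_mul (hqbdd u y) (hfL u (hball hu)) (abs_nonneg _) hCq
      have h2 := mul_le_mul (hqLip2 x u y) (hfC x) (hf0 x) (by positivity)
      linarith)).2.2.2
  have hint1 : Integrable (fun z => kx z * q z y * f z) := by
    refine hφ.1.congr (ae_of_all _ fun z => ?_)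
    simp only [hkx]; ring
  have hint2 : Integrable (fun z => kx z * (ψ z - q z y) * f z) := by
    refine (hix.mul_const (qLip * (w * δ) * Cr)).mono' (((hkm x).mul (hψm.sub hqm2)).mul hfm).aestronglyMeasurable (ae_of_all _ fun z => ?_)
    rw [Real.norm_eq_abs, abs_mul, abs_mul, abs_of_nonneg (hk0 x z), abs_of_nonneg (hf0 z), mul_assoc]
    exact mul_le_mul_of_nonneg_left (mul_le_mul (hψq z) (hfC z) (hf0 z) (by positivity)) (hk0 x z)
  have hb2 : |∫ z, kx z * (ψ z - q z y) * f z| ≤ qLip * (w * δ) * Cr := by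
    rw [← Real.norm_eq_abs]
    refine (norm_integral_le_of_norm_le (hix.mul_const (qLip * (w * δ) * Cr)) (ae_of_all _ fun z => ?_)).trans ?_
    · rw [Real.norm_eq_abs, abs_mul, abs_mul, abs_of_nonneg (hk0 x z), abs_of_nonneg (hf0 z), mul_assoc]
      exact mul_le_mul_of_nonneg_left (mul_le_mul (hψq z) (hfC z) (hf0 z) (by positivity)) (hk0 x z)
    · rw [integral_mul_const, hone, one_mul]
  have hsum : ∫ z, kx z * ψ z * f z = (∫ z, kx z * (ψ z - q z y) * f z) + ∫ z, kx z * (q z y * f z) := by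
    rw [← integral_add hint2 hφ.1]
    refine integral_congr_ae (ae_of_all _ fun z => ?_)
    simp only [hkx]; ring
  rw [ea]
  simp_rw [hQψ]
  rw [hdens ψ hψm, hsum]
  have hb1 : |(∫ z, kx z * (q z y * f z)) - q x y * f x| ≤ _ := hφ.2
  rw [abs_le] at hb1 hb2 ⊢
  constructor <;> nlinarith [hb1.1, hb1.2, hb2.1, hb2.2]

theorem stmt5
    {d : ℕ} (hd : 1 ≤ d)
    {Ω : Type*} [MeasurableSpace Ω] (P : Measure Ω) [IsProbabilityMeasure P]
    (E : Set (EuclideanSpace ℝ (Fin d))) (hEopen : IsOpen E) (hEne : E.Nonempty)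
    (Zm : ℕ → Ω → (EuclideanSpace ℝ (Fin d))) (hZmmeas : ∀ n, Measurable (Zm n))
    (hZmmem : ∀ n, 1 ≤ n → ∀ ω, Zm n ω ∈ closure E)
    (R : (EuclideanSpace ℝ (Fin d)) → Measure (EuclideanSpace ℝ (Fin d))) (hRprob : ∀ ξ, IsProbabilityMeasure (R ξ))
    (hRkermeas : ∀ B : Set (EuclideanSpace ℝ (Fin d)), MeasurableSet B → Measurable fun ξ => R ξ B)
    (hMarkov : ∀ n, 1 ≤ n → ∀ g : (EuclideanSpace ℝ (Fin d)) → ℝ, Measurable g → (∃ C, ∀ u, |g u| ≤ C) →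
      P[fun ω => g (Zm (n+1) ω)|⨆ i : Fin n, MeasurableSpace.comap (Zm (i.1+1)) inferInstance]
        =ᵐ[P] fun ω => ∫ u, g u ∂(R (Zm n ω)))
    (μ : Measure (EuclideanSpace ℝ (Fin d))) (hμprob : IsProbabilityMeasure μ)
    (ε : ℝ) (hε : 0 < ε) (k : ℕ) (hk : 1 ≤ k)
    (hDoeblin : ∀ ξ ∈ closure E, ∀ B : Set (EuclideanSpace ℝ (Fin d)), MeasurableSet B →
      ENNReal.ofReal ε * μ B ≤ iterK R k ξ B)
    (π : Measure (EuclideanSpace ℝ (Fin d))) (hπprob : IsProbabilityMeasure π)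
    (hπinv : ∀ B : Set (EuclideanSpace ℝ (Fin d)), MeasurableSet B → π B = ∫⁻ ξ, R ξ B ∂π)
    (κ ρ : ℝ) (hκ : 0 < κ) (hρ : 1 < ρ)
    (hTV : ∀ n : ℕ, 1 ≤ n → ∀ ξ ∈ closure E, ∀ B : Set (EuclideanSpace ℝ (Fin d)), MeasurableSet B →
      |(iterK R n ξ B).toReal - (π B).toReal| ≤ κ * ρ ^ (-(n:ℝ)))
    (r : (EuclideanSpace ℝ (Fin d)) → (EuclideanSpace ℝ (Fin d)) → ℝ) (hrmeas : Measurable (Function.uncurry r)) (hrnonneg : ∀ a b, 0 ≤ r a b)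
    (Cr : ℝ) (hrbdd : ∀ a b, r a b ≤ Cr)
    (rLip : ℝ) (hrLip : ∀ a : (EuclideanSpace ℝ (Fin d)), ∀ b ∈ E, ∀ b' ∈ E, |r a b' - r a b| ≤ rLip * dist b' b)
    (hRdens : ∀ ξ ∈ closure E, ∀ B : Set (EuclideanSpace ℝ (Fin d)), B ⊆ E → MeasurableSet B →
      R ξ B = ∫⁻ z in B, ENNReal.ofReal (r ξ z) ∂volume)
    (p : (EuclideanSpace ℝ (Fin d)) → ℝ) (hp : ∀ z ∈ E, p z = ∫ u, r u z ∂π)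
    (K : (EuclideanSpace ℝ (Fin d)) → ℝ) (hKmeas : Measurable K) (hKnonneg : ∀ z, 0 ≤ K z)
    (CK : ℝ) (hKbdd : ∀ z, K z ≤ CK) (hKint : ∫ z, K z ∂volume = 1)
    (δ : ℝ) (hδ : 0 < δ) (hKsupp : Function.support K ⊆ Metric.ball 0 δ)
    (v1 Alpha : ℝ) (hv1 : 0 < v1) (hAlpha : 0 < Alpha)
    (v : ℕ → ℝ) (hv : ∀ j : ℕ, v j = v1 * (j:ℝ) ^ (-Alpha))
    (Z : ℕ → Ω → (EuclideanSpace ℝ (Fin d))) (hZmeas : ∀ n, Measurable (Z n)) (hZmem : ∀ n, 1 ≤ n → ∀ ω, Z n ω ∈ E)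
    (Qm : (EuclideanSpace ℝ (Fin d)) → Measure (EuclideanSpace ℝ (Fin d))) (hQprob : ∀ ξ, IsProbabilityMeasure (Qm ξ))
    (q : (EuclideanSpace ℝ (Fin d)) → (EuclideanSpace ℝ (Fin d)) → ℝ) (hqmeas : Measurable (Function.uncurry q)) (hqnonneg : ∀ a b, 0 ≤ q a b)
    (Cq : ℝ) (hqbdd : ∀ a b, q a b ≤ Cq)
    (qLip : ℝ) (hqLip1 : ∀ a b b' : (EuclideanSpace ℝ (Fin d)), |q a b' - q a b| ≤ qLip * dist b' b)
    (hqLip2 : ∀ a a' b : (EuclideanSpace ℝ (Fin d)), |q a' b - q a b| ≤ qLip * dist a' a)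
    (hQdens : ∀ ξ : (EuclideanSpace ℝ (Fin d)), ∀ B : Set (EuclideanSpace ℝ (Fin d)), MeasurableSet B →
      Qm ξ B = ∫⁻ z in B, ENNReal.ofReal (q ξ z) ∂volume)
    (hZcond : ∀ n, 1 ≤ n → ∀ g : (EuclideanSpace ℝ (Fin d)) → ℝ, Measurable g → (∃ C, ∀ u, |g u| ≤ C) →
      P[fun ω => g (Z n ω)|(⨆ i : Fin n, MeasurableSpace.comap (Zm (i.1+1)) inferInstance) ⊔
          (⨆ i : Fin (n-1), MeasurableSpace.comap (Z (i.1+1)) inferInstance)]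
        =ᵐ[P] fun ω => ∫ u, g u ∂(Qm (Zm n ω)))
    (Bc bc : ℝ) (hBc : 0 < Bc) (hbc : 1 < bc)
    (hcov : ∀ g h : (EuclideanSpace ℝ (Fin d)) → (EuclideanSpace ℝ (Fin d)) → ℝ, Measurable (Function.uncurry g) → Measurable (Function.uncurry h) →
      (∀ a b, |g a b| ≤ 1) → (∀ a b, |h a b| ≤ 1) →
      ∀ m n : ℕ, 1 ≤ m → m ≤ n →
        |∫ ω, g (Zm m ω) (Z m ω) * h (Zm n ω) (Z n ω) ∂P -
          (∫ ω, g (Zm m ω) (Z m ω) ∂P) * (∫ ω, h (Zm n ω) (Z n ω) ∂P)| ≤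
          Bc * bc ^ (-((n:ℝ) - (m:ℝ))) * (1 + bc ^ (-(m:ℝ))))
    (w1 Beta : ℝ) (hw1 : 0 < w1) (hBeta : 0 < Beta)
    (w : ℕ → ℝ) (hw : ∀ j : ℕ, w j = w1 * (j:ℝ) ^ (-Beta))
    (x y : (EuclideanSpace ℝ (Fin d))) (hx : x ∈ E) (hy : y ∈ E)
    (hxdist : max v1 w1 * δ < Metric.infDist x (frontier E))
    (hydist : w1 * δ < Metric.infDist y (frontier E))
    (hβ1 : 2 * (1 - Alpha * d) < 4 * Beta)
    (hβ2 : 4 * Beta < min (1 / (2 * (d:ℝ))) (Alpha - 1 / (2 * (d:ℝ)))) :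
    ∀ᵐ ω ∂P, Tendsto
      (fun n : ℕ => (n:ℝ) ^ ((1 - Alpha * d) / 2) * (((n:ℝ)⁻¹ * ∑ j ∈ Finset.Icc 1 (n+1), ((w j) ^ (2*d))⁻¹ * (K ((w j)⁻¹ • (Zm j ω - x)) * K ((w j)⁻¹ • (Z j ω - y)))) - p x * q x y))
      atTop (nhds 0) := by
  classical
  have hR : Measurable R := Measure.measurable_of_measurable_coe R hRkermeas
  have hCr : 0 ≤ Cr := (hrnonneg x x).trans (hrbdd x x)
  have hCq : 0 ≤ Cq := (hqnonneg x x).trans (hqbdd x x)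
  have hCK : 0 ≤ CK := (hKnonneg x).trans (hKbdd x)
  have hmprob : ∀ n, IsProbabilityMeasure (P.map (Zm n)) := fun n =>
    Measure.isProbabilityMeasure_map (hZmmeas n).aemeasurable
  have hmcl : ∀ n, 1 ≤ n → ∀ᵐ ξ ∂(P.map (Zm n)), ξ ∈ closure E := fun n hn =>
    (ae_map_iff (hZmmeas n).aemeasurable isClosed_closure.measurableSet).2 (ae_of_all _ (hZmmem n hn))
  have hlaw : ∀ n, 1 ≤ n → P.map (Zm (n+1)) = (P.map (Zm n)).bind R := fun n hn =>
    aux_law _ P (Zm n) (Zm (n+1)) (hZmmeas n) (hZmmeas (n+1)) R hR hRprob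
      (iSup_le fun i => (hZmmeas _).comap_le) (hMarkov n hn)
  -- exponents
  have hd0 : (1:ℝ) ≤ d := by exact_mod_cast hd
  have hdpos : (0:ℝ) < d := by linarith
  have hB1 : 4 * Beta < 1 / (2 * (d:ℝ)) := lt_of_lt_of_le hβ2 (min_le_left _ _)
  have hB2 : 4 * Beta < Alpha - 1 / (2 * (d:ℝ)) := lt_of_lt_of_le hβ2 (min_le_right _ _)
  have hBeta1 : Beta < 1 := by
    have : 1 / (2 * (d:ℝ)) ≤ 1 := by rw [div_le_one (by positivity)]; linarith
    linarith
  have hB3 : 4 * Beta * d < Alpha * d - 1 / 2 := by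
    have := mul_lt_mul_of_pos_right hB2 hdpos
    have e : (Alpha - 1 / (2 * (d:ℝ))) * d = Alpha * d - 1 / 2 := by field_simp
    linarith
  set γ : ℝ := (1 - Alpha * d) / 2 with hγ
  set a : ℝ := Beta * (2 * d) with ha
  have ha0 : 0 ≤ a := by positivity
  have hs1 : 3 / 4 + a < 1 - γ := by simp only [ha, hγ]; linarith
  have hs2 : 1 - Beta < 1 - γ := by simp only [hγ]; linarith
  -- weights
  have hwpos : ∀ j, 1 ≤ j → 0 < w j := fun j hj => by
    have : (0:ℝ) < j := by exact_mod_cast hj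
    rw [hw]; positivity
  have hwle : ∀ j, 1 ≤ j → w j ≤ w1 := fun j hj => by
    have h1 : (1:ℝ) ≤ j := by exact_mod_cast hj
    rw [hw]
    have := Real.rpow_le_one_of_one_le_of_nonpos h1 (by linarith : -Beta ≤ 0)
    nlinarith
  have hwinv : ∀ j, 1 ≤ j → ((w j) ^ (2*d))⁻¹ = (w1 ^ (2*d))⁻¹ * (j:ℝ) ^ a := fun j hj => by
    have h1 : (0:ℝ) < j := by exact_mod_cast hj
    rw [hw, mul_pow, mul_inv, ← Real.rpow_natCast ((j:ℝ) ^ (-Beta)), ← Real.rpow_mul h1.le, ← Real.rpow_neg h1.le]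
    congr 2
    simp only [ha]; push_cast; ring
  set M : ℝ := CK + 1 with hM
  have hM0 : 0 < M := by positivity
  set Y : ℕ → Ω → ℝ := fun j ω => ((w j) ^ (2*d))⁻¹ * (K ((w j)⁻¹ • (Zm j ω - x)) * K ((w j)⁻¹ • (Z j ω - y))) with hY
  have hKm : ∀ (t : ℝ) (z : EuclideanSpace ℝ (Fin d)), Measurable fun u : EuclideanSpace ℝ (Fin d) => K (t • (u - z)) := fun t z => by
    have : Measurable (fun u : EuclideanSpace ℝ (Fin d) => t • (u - z)) := by fun_prop
    exact hKmeas.comp this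
  have hYm : ∀ j, Measurable (Y j) := fun j =>
    (((hKm _ x).comp (hZmmeas j)).mul ((hKm _ y).comp (hZmeas j))).const_mul _
  have hwj0 : ∀ j, 0 ≤ w j := fun j => by rw [hw]; positivity
  have hY0 : ∀ j ω, 0 ≤ Y j ω := fun j ω =>
    mul_nonneg (inv_nonneg.2 (pow_nonneg (hwj0 j) _)) (mul_nonneg (hKnonneg _) (hKnonneg _))
  have hKM : ∀ z, K z ≤ M := fun z => by simp only [hM]; linarith [hKbdd z]
  have hKKM : ∀ z z', K z * K z' ≤ M ^ 2 := fun z z' => by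
    rw [pow_two]; exact mul_le_mul (hKM z) (hKM z') (hKnonneg _) hM0.le
  set C : ℝ := (w1 ^ (2*d))⁻¹ * M ^ 2 with hC
  have hC0 : 0 ≤ C := by positivity
  have hYb : ∀ j, 1 ≤ j → ∀ ω, Y j ω ≤ C * (j:ℝ) ^ a := fun j hj ω => by
    simp only [hY, hC]
    rw [hwinv j hj]
    calc _ ≤ (w1 ^ (2*d))⁻¹ * (j:ℝ) ^ a * M ^ 2 := mul_le_mul_of_nonneg_left (hKKM _ _) (by positivity)
      _ = _ := by ring
  -- covariance
  set G : ℕ → EuclideanSpace ℝ (Fin d) → EuclideanSpace ℝ (Fin d) → ℝ :=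
    fun j u v => K ((w j)⁻¹ • (u - x)) * K ((w j)⁻¹ • (v - y)) / M ^ 2 with hG
  have hGm : ∀ j, Measurable (Function.uncurry (G j)) := fun j =>
    (((hKm _ x).comp measurable_fst).mul ((hKm _ y).comp measurable_snd)).div_const _
  have hGb : ∀ j u v, |G j u v| ≤ 1 := fun j u v => by
    simp only [hG]
    rw [abs_of_nonneg (div_nonneg (mul_nonneg (hKnonneg _) (hKnonneg _)) (by positivity)), div_le_one (by positivity)]
    exact hKKM _ _
  have hYG : ∀ j, 1 ≤ j → ∀ ω, Y j ω = C * (j:ℝ) ^ a * G j (Zm j ω) (Z j ω) := fun j hj ω => by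
    simp only [hY, hC, hG]
    rw [hwinv j hj]; field_simp
  have hbc0 : 0 < bc := by linarith
  have hcovY : ∀ i j, 1 ≤ i → i ≤ j → |∫ ω, Y i ω * Y j ω ∂P - (∫ ω, Y i ω ∂P) * ∫ ω, Y j ω ∂P|
      ≤ (C ^ 2 * Bc * 2) * (i:ℝ) ^ a * (j:ℝ) ^ a * (bc⁻¹) ^ (j - i) := by
    intro i j hi hij
    have hj : 1 ≤ j := by omega
    have h1 := hcov (G i) (G j) (hGm i) (hGm j) (hGb i) (hGb j) i j hi hij
    have e1 : ∫ ω, Y i ω * Y j ω ∂P = (C * (i:ℝ) ^ a) * (C * (j:ℝ) ^ a) * ∫ ω, G i (Zm i ω) (Z i ω) * G j (Zm j ω) (Z j ω) ∂P := by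
      rw [← integral_const_mul]
      refine integral_congr_ae (ae_of_all _ fun ω => ?_)
      simp only [hYG i hi, hYG j hj]; ring
    have e2 : ∀ j, 1 ≤ j → ∫ ω, Y j ω ∂P = (C * (j:ℝ) ^ a) * ∫ ω, G j (Zm j ω) (Z j ω) ∂P := fun j hj => by
      rw [← integral_const_mul]
      exact integral_congr_ae (ae_of_all _ fun ω => hYG j hj ω)
    have e3 : bc ^ (-((j:ℝ) - (i:ℝ))) = (bc⁻¹) ^ (j - i) := by
      rw [← Nat.cast_sub hij, Real.rpow_neg hbc0.le, Real.rpow_natCast, inv_pow]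
    have e4 : bc ^ (-(i:ℝ)) ≤ 1 := Real.rpow_le_one_of_one_le_of_nonpos hbc.le (by simp)
    rw [e3] at h1
    rw [e1, e2 i hi, e2 j hj]
    have e5 : ∀ A B D I J : ℝ, A * B * I - A * J * (B * D) = (A * B) * (I - J * D) := fun A B D I J => by ring
    rw [e5, abs_mul, abs_of_nonneg (by positivity)]
    have hcp : 0 ≤ (bc⁻¹) ^ (j - i) := by positivity
    calc _ ≤ (C * (i:ℝ) ^ a * (C * (j:ℝ) ^ a)) * (Bc * (bc⁻¹) ^ (j - i) * (1 + 1)) := by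
          refine mul_le_mul_of_nonneg_left (h1.trans ?_) (by positivity)
          gcongr
      _ = _ := by ring
  -- bias
  have hρ0 : 0 < ρ := by linarith
  have hqLip0 : 0 ≤ |qLip| := abs_nonneg _
  have hrLip0 : 0 ≤ |rLip| := abs_nonneg _
  set A : ℝ := Cr * |qLip| + (Cq * |rLip| + Cr * |qLip|) with hA
  set C3 : ℝ := A * (w1 * δ) + Cr * (κ * (ρ ^ 2 / (ρ - 1))) * Cq with hC3
  have hρ1 : 0 < ρ - 1 := by linarith
  have hA0 : 0 ≤ A := by positivity
  have hC30 : 0 ≤ C3 := by positivity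
  have hbias3 : ∀ j, 3 ≤ j → |∫ ω, Y j ω ∂P - p x * q x y| ≤ C3 * (j:ℝ) ^ (-Beta) := by
    intro j hj
    obtain ⟨n, rfl⟩ : ∃ n, j = n + 1 + 1 := ⟨j - 2, by omega⟩
    have hn : 1 ≤ n := by omega
    have hball : Metric.ball x (w (n+1+1) * δ) ⊆ E := by
      refine aux_ball E hEopen x hx _ (mul_pos (hwpos _ (by omega)) hδ) (le_trans ?_ hxdist.le)
      exact mul_le_mul_of_nonneg_right ((hwle _ (by omega)).trans (le_max_right _ _)) hδ.le
    have hmp := hmprob (n+1)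
    have hb := aux_bias _ P E hEopen (Zm (n+1+1)) (Z (n+1+1)) (hZmmeas _) (hZmeas _) R hR r hrmeas hrnonneg Cr hrbdd
      |rLip| hrLip0 (fun a b hb b' hb' => (hrLip a b hb b' hb').trans
        (mul_le_mul_of_nonneg_right (le_abs_self _) dist_nonneg)) hRdens (P.map (Zm (n+1))) (hmcl _ (by omega))
      (hlaw (n+1) (by omega)) K hKmeas hKnonneg CK hKbdd hKint δ hδ hKsupp Qm q hqmeas hqnonneg Cq hqbdd |qLip| hqLip0
      (fun a b b' => (hqLip1 a b b').trans (mul_le_mul_of_nonneg_right (le_abs_self _) dist_nonneg))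
      (fun a a' b => (hqLip2 a a' b).trans (mul_le_mul_of_nonneg_right (le_abs_self _) dist_nonneg)) hQdens
      (sup_le (iSup_le fun i => (hZmmeas _).comap_le) (iSup_le fun i => (hZmeas _).comap_le))
      (measurable_iff_comap_le.2 (le_sup_of_le_left
        (le_iSup (fun i : Fin (n+1+1) => MeasurableSpace.comap (Zm (i.1+1)) inferInstance) ⟨n+1, by omega⟩)))
      (hZcond (n+1+1) (by omega)) (w (n+1+1)) (hwpos _ (by omega)) x y hx hball
    have htv : |∫ u, r u x ∂(P.map (Zm (n+1))) - ∫ u, r u x ∂π| ≤ Cr * (κ * ρ ^ (-(n:ℝ))) := by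
      refine aux_layer _ π (fun u => r u x) (hrmeas.comp (measurable_id.prodMk measurable_const)) Cr _
        (fun u => hrnonneg u x) (fun u => hrbdd u x) hCr ?_
      intro B hB
      have hmp1 := hmprob 1
      have e := aux_iter_law R hR (fun n => P.map (Zm n)) hlaw n
      change P.map (Zm (n+1)) = _ at e
      rw [e]
      exact aux_TV R hR hRprob (P.map (Zm 1)) π (closure E) (hmcl 1 le_rfl) n _ B hB (fun ξ hξ => hTV n hn ξ hξ B hB)
    rw [← hp x hx] at htv
    have hjpos : (0:ℝ) < ((n+1+1:ℕ):ℝ) := by positivity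
    have hgeo : ρ ^ (-(n:ℝ)) ≤ ρ ^ 2 / (ρ - 1) * ((n+1+1:ℕ):ℝ) ^ (-Beta) := by
      have b1 := one_add_mul_le_pow (a := ρ - 1) (by linarith) (n+1+1)
      rw [show 1 + (ρ - 1) = ρ by ring] at b1
      have b2 : ((n+1+1:ℕ):ℝ) ^ (-(1:ℝ)) ≤ ((n+1+1:ℕ):ℝ) ^ (-Beta) :=
        Real.rpow_le_rpow_of_exponent_le (by push_cast; linarith [(Nat.cast_nonneg n : (0:ℝ) ≤ n)]) (by linarith)
      rw [Real.rpow_neg_one] at b2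
      have b3 : ρ ^ (-(n:ℝ)) = ρ ^ 2 * (ρ ^ (n+1+1))⁻¹ := by
        rw [Real.rpow_neg hρ0.le, Real.rpow_natCast, show ρ ^ (n+1+1) = ρ ^ n * ρ ^ 2 by ring]; field_simp
      rw [b3]
      calc ρ ^ 2 * (ρ ^ (n+1+1))⁻¹ ≤ ρ ^ 2 * (((n+1+1:ℕ):ℝ) * (ρ - 1))⁻¹ := by
            refine mul_le_mul_of_nonneg_left (inv_anti₀ (by positivity) (by linarith)) (by positivity)
        _ = ρ ^ 2 / (ρ - 1) * (((n+1+1:ℕ):ℝ))⁻¹ := by rw [mul_inv]; ring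
        _ ≤ _ := mul_le_mul_of_nonneg_left b2 (by positivity)
    have hq' : |(∫ u, r u x ∂(P.map (Zm (n+1))) - p x) * q x y| ≤ Cr * (κ * (ρ ^ 2 / (ρ - 1) * ((n+1+1:ℕ):ℝ) ^ (-Beta))) * Cq := by
      rw [abs_mul, abs_of_nonneg (hqnonneg x y)]
      refine mul_le_mul (htv.trans ?_) (hqbdd x y) (hqnonneg x y) (by positivity)
      gcongr
    have hfin : ∫ ω, Y (n+1+1) ω ∂P - p x * q x y = (∫ ω, Y (n+1+1) ω ∂P - (∫ u, r u x ∂(P.map (Zm (n+1)))) * q x y)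
      + (∫ u, r u x ∂(P.map (Zm (n+1))) - p x) * q x y := by ring
    rw [hfin]
    refine (abs_add_le _ _).trans ((add_le_add hb hq').trans (le_of_eq ?_))
    rw [hw (n+1+1), hC3]; ring
  set h : ℝ := p x * q x y with hh
  set C' : ℝ := C3 + |∫ ω, Y 1 ω ∂P - h| * ((1:ℕ):ℝ) ^ Beta + |∫ ω, Y 2 ω ∂P - h| * ((2:ℕ):ℝ) ^ Beta with hC'
  have t1 : 0 ≤ |∫ ω, Y 1 ω ∂P - h| * ((1:ℕ):ℝ) ^ Beta := by positivity
  have t2 : 0 ≤ |∫ ω, Y 2 ω ∂P - h| * ((2:ℕ):ℝ) ^ Beta := by positivity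
  have hC'0 : 0 ≤ C' := by simp only [hC']; linarith
  have hbias : ∀ j, 1 ≤ j → |∫ ω, Y j ω ∂P - h| ≤ C' * (j:ℝ) ^ (-Beta) := by
    intro j hj
    have hj0 : (0:ℝ) < j := by exact_mod_cast hj
    have hjj : (0:ℝ) < (j:ℝ) ^ Beta := by positivity
    rw [Real.rpow_neg hj0.le, ← div_eq_mul_inv, le_div_iff₀ hjj]
    rcases (by omega : j = 1 ∨ j = 2 ∨ 3 ≤ j) with rfl | rfl | h3
    · simp only [hC']; linarith
    · simp only [hC']; linarith
    · have := hbias3 j h3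
      rw [Real.rpow_neg hj0.le, ← div_eq_mul_inv, le_div_iff₀ hjj] at this
      simp only [hC']; linarith
  have hmain := aux_main P Y hYm hY0 C a (C ^ 2 * Bc * 2) (bc⁻¹) C' Beta (1 - γ) h hC0 ha0 (by positivity)
    (by positivity) (inv_lt_one_of_one_lt₀ hbc) hC'0 hBeta hBeta1 hs1 hs2 hYb hcovY hbias
  filter_upwards [hmain] with ω hω
  have l1 := (tendsto_add_atTop_iff_nat 1).2 hω
  have l2 : Tendsto (fun n : ℕ => (1 + 1 / (n:ℝ)) ^ (1 - γ)) atTop (nhds 1) := by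
    have : Tendsto (fun n : ℕ => 1 + 1 / (n:ℝ)) atTop (nhds 1) := by
      simpa using (tendsto_one_div_atTop_nhds_zero_nat (𝕜 := ℝ)).const_add 1
    have := this.rpow_const (p := 1 - γ) (Or.inl one_ne_zero)
    simpa using this
  have l3 : Tendsto (fun n : ℕ => h * (n:ℝ) ^ (-(1 - γ))) atTop (nhds 0) := by
    have := ((tendsto_rpow_neg_atTop (y := 1 - γ) (by linarith)).comp tendsto_natCast_atTop_atTop).const_mul h
    simpa [Function.comp_def] using this
  have l4 := (l1.mul l2).add l3
  simp only [zero_mul, add_zero] at l4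
  refine l4.congr' ?_
  filter_upwards [eventually_ge_atTop 1] with n hn
  have hn0 : (0:ℝ) < n := by exact_mod_cast hn
  have hn1 : (0:ℝ) < (n:ℝ) + 1 := by linarith
  have e1 : (1 + 1 / (n:ℝ)) ^ (1 - γ) = ((n:ℝ) + 1) ^ (1 - γ) * (n:ℝ) ^ (-(1 - γ)) := by
    rw [show 1 + 1 / (n:ℝ) = ((n:ℝ) + 1) / n by field_simp, Real.div_rpow hn1.le hn0.le, Real.rpow_neg hn0.le]; rfl
  have e2 : (n:ℝ) ^ γ = (n:ℝ) ^ (-(1 - γ)) * n := by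
    rw [← Real.rpow_add_one hn0.ne']; congr 1; ring
  rw [e1, e2]
  have hpos : (0:ℝ) < ((n:ℝ) + 1) ^ (1 - γ) := by positivity
  have key : ∀ S H N V W : ℝ, N ≠ 0 → V ≠ 0 →
      (S - (N + 1) * H) / V * (V * W) + H * W = W * N * (N⁻¹ * S - H) := by
    intro S H N V W hN hV
    field_simp
    ring
  simp only [Nat.cast_add, Nat.cast_one]
  exact key _ _ _ _ _ hn0.ne' hpos.ne'
end

section
/- The process (Zₙ⁻)_{n≥1} defined by Zₙ⁻ := Φ_{Z_{n−1}}(Sₙ) is a Markov chain: for every n ≥ 1 and every Borel set B ⊆ ℝ^d, P(Z_{n+1}⁻ ∈ B | Z₁⁻, …, Zₙ⁻) = R(Zₙ⁻, B) almost surely, where the transition kernel R is given by R(y, B) := ∫_E S(z, Φ_z^{−1}(B) ∩ [0, ∞)) Q(y, dz) and Φ_z^{−1}(B) := {t ∈ ℝ : Φ_z(t) ∈ B}. -/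
open MeasureTheory ProbabilityTheory Filter

/-- Freezing lemma: a conditional law of `Y` given `m` of the form `κ (X ω)` with `X`
`m`-measurable gives the conditional law of the pair. -/
lemma condExp_pair_aux {Ω α β : Type*} (m : MeasurableSpace Ω) {mΩ : MeasurableSpace Ω} [MeasurableSpace α]
    [MeasurableSpace β] (P : Measure Ω) [IsProbabilityMeasure P]
    (hm : m ≤ mΩ) (X : Ω → α) (Y : Ω → β) (hX : Measurable[m] X)
    (hY : Measurable Y) (κ : Kernel α β) [IsMarkovKernel κ]
    (h : ∀ C : Set β, MeasurableSet C →
      P[fun ω => C.indicator (fun _ => (1:ℝ)) (Y ω)|m] =ᵐ[P] fun ω => (κ (X ω)).real C)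
    (A : Set (α × β)) (hA : MeasurableSet A) :
    P[fun ω => A.indicator (fun _ => (1:ℝ)) (X ω, Y ω)|m]
      =ᵐ[P] fun ω => (κ (X ω)).real (Prod.mk (X ω) ⁻¹' A) := by
  have hX' : Measurable X := hX.mono hm le_rfl
  have hint : ∀ C : Set β, MeasurableSet C →
      Integrable (fun ω => C.indicator (fun _ => (1:ℝ)) (Y ω)) P := by
    intro C hC
    have : (fun ω => C.indicator (fun _ => (1:ℝ)) (Y ω))
        = (Y ⁻¹' C).indicator (fun _ => (1:ℝ)) := by ext ω; rfl
    rw [this]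
    exact (integrable_const 1).indicator (hY hC)
  have hset : ∀ s, MeasurableSet[m] s → ∀ C : Set β, MeasurableSet C →
      ∫⁻ ω in s, κ (X ω) C ∂P = P (s ∩ Y ⁻¹' C) := by
    intro s hs C hC
    have h1 := setIntegral_condExp hm (hint C hC) hs
    have h2 : ∫ ω in s, (P[fun ω => C.indicator (fun _ => (1:ℝ)) (Y ω)|m]) ω ∂P
        = ∫ ω in s, (κ (X ω)).real C ∂P :=
      integral_congr_ae (ae_restrict_of_ae (h C hC))
    have h3 : ∫ ω in s, C.indicator (fun _ => (1:ℝ)) (Y ω) ∂P = P.real (s ∩ Y ⁻¹' C) := by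
      have : (fun ω => C.indicator (fun _ => (1:ℝ)) (Y ω))
          = (Y ⁻¹' C).indicator (fun _ => (1:ℝ)) := by ext ω; rfl
      rw [this, integral_indicator (hY hC)]
      simp [measureReal_def, Measure.restrict_apply, hY hC, Set.inter_comm]
    have h4 : ∫ ω in s, (κ (X ω)).real C ∂P = (∫⁻ ω in s, κ (X ω) C ∂P).toReal := by
      simp only [measureReal_def]
      rw [integral_toReal]
      · exact ((κ.measurable_coe hC).comp hX').aemeasurable
      · exact Eventually.of_forall fun ω => measure_lt_top _ _
    have h5 : ∫⁻ ω in s, κ (X ω) C ∂P ≠ ⊤ := by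
      refine ne_of_lt (lt_of_le_of_lt (lintegral_mono (g := fun _ => 1) fun ω => prob_le_one) ?_)
      simp
    rw [← ENNReal.toReal_eq_toReal_iff' h5 (measure_ne_top _ _), ← h4, ← h2, h1, h3,
      measureReal_def]
  have hsec : Measurable fun a => κ a (Prod.mk a ⁻¹' A) :=
    Kernel.measurable_kernel_prodMk_left hA
  have hAint : Integrable (fun ω => A.indicator (fun _ => (1:ℝ)) (X ω, Y ω)) P := by
    have : (fun ω => A.indicator (fun _ => (1:ℝ)) (X ω, Y ω))
        = ((fun ω => (X ω, Y ω)) ⁻¹' A).indicator (fun _ => (1:ℝ)) := by ext ω; rfl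
    rw [this]
    exact (integrable_const 1).indicator ((hX'.prodMk hY) hA)
  have hmeasm : Measurable[m] fun ω => (κ (X ω)).real (Prod.mk (X ω) ⁻¹' A) :=
    (hsec.ennreal_toReal).comp hX
  have hRint : Integrable (fun ω => (κ (X ω)).real (Prod.mk (X ω) ⁻¹' A)) P := by
    refine Integrable.of_bound (hmeasm.mono hm le_rfl).aestronglyMeasurable 1
      (Eventually.of_forall fun ω => ?_)
    rw [Real.norm_of_nonneg measureReal_nonneg]
    exact measureReal_le_one
  symm
  refine ae_eq_condExp_of_forall_setIntegral_eq hm hAint (fun _ _ _ => hRint.integrableOn) ?_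
    hmeasm.stronglyMeasurable.aestronglyMeasurable
  intro s hs _
  have key : (P.restrict s).map (fun ω => (X ω, Y ω)) = ((P.restrict s).map X) ⊗ₘ κ := by
    refine Measure.ext_prod (fun {a} {c} ha hc => ?_)
    rw [Measure.compProd_apply_prod ha hc, Measure.map_apply (hX'.prodMk hY) (ha.prod hc),
      setLIntegral_map ha (κ.measurable_coe hc) hX', Measure.restrict_restrict (hX' ha),
      hset _ ((hX ha).inter hs) c hc,
      Measure.restrict_apply ((hX'.prodMk hY) (ha.prod hc))]
    congr 1
    ext ω
    simp only [Set.mem_inter_iff, Set.mem_preimage, Set.mem_prod]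
    tauto
  have k2 := congrArg (fun μ => μ A) key
  beta_reduce at k2
  rw [Measure.compProd_apply hA, lintegral_map hsec hX',
    Measure.map_apply (hX'.prodMk hY) hA] at k2
  have this : (fun ω => A.indicator (fun _ => (1:ℝ)) (X ω, Y ω))
        = ((fun ω => (X ω, Y ω)) ⁻¹' A).indicator (fun _ => (1:ℝ)) := by ext ω; rfl
  rw [this, integral_indicator ((hX'.prodMk hY) hA)]
  simp only [measureReal_def]
  rw [integral_toReal]
  · rw [← k2]
    simp [measureReal_def]
  · exact (hsec.comp hX').aemeasurable
  · exact Eventually.of_forall fun ω => measure_lt_top _ _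

theorem stmt6
    {d : ℕ} (hd : 1 ≤ d)
    {Ω : Type*} [MeasurableSpace Ω] (P : Measure Ω) [IsProbabilityMeasure P]
    (E : Set (EuclideanSpace ℝ (Fin d))) (hEopen : IsOpen E) (hEne : E.Nonempty)
    (Φ : (EuclideanSpace ℝ (Fin d)) → ℝ → (EuclideanSpace ℝ (Fin d))) (hΦmeas : Measurable (fun p : (EuclideanSpace ℝ (Fin d)) × ℝ => Φ p.1 p.2))
    (hflow : ∀ ξ : (EuclideanSpace ℝ (Fin d)), ∀ s t : ℝ, Φ ξ (t + s) = Φ (Φ ξ t) s)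
    (Sker : (EuclideanSpace ℝ (Fin d)) → Measure ℝ) (hSprob : ∀ z ∈ E, IsProbabilityMeasure (Sker z))
    (hSsupp : ∀ z ∈ E, Sker z (Set.Iio 0) = 0)
    (hSkermeas : ∀ Γ : Set ℝ, MeasurableSet Γ → Measurable fun z => Sker z Γ)
    (Qm : (EuclideanSpace ℝ (Fin d)) → Measure (EuclideanSpace ℝ (Fin d))) (hQprob : ∀ ξ, IsProbabilityMeasure (Qm ξ))
    (hQsupp : ∀ ξ, Qm ξ Eᶜ = 0)
    (hQkermeas : ∀ B : Set (EuclideanSpace ℝ (Fin d)), MeasurableSet B → Measurable fun ξ => Qm ξ B)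
    (Z : ℕ → Ω → (EuclideanSpace ℝ (Fin d))) (S : ℕ → Ω → ℝ)
    (hZmeas : ∀ n, Measurable (Z n)) (hSmeas : ∀ n, Measurable (S n))
    (hZmem : ∀ n ω, Z n ω ∈ E) (hSnonneg : ∀ n ω, 0 ≤ S n ω) (hS0 : ∀ ω, S 0 ω = 0)
    (hcondS : ∀ n : ℕ, ∀ g : ℝ → ℝ, Measurable g → (∃ C, ∀ t, |g t| ≤ C) →
      P[fun ω => g (S (n+1) ω)|⨆ i : Fin (n+1),
          (MeasurableSpace.comap (Z i.1) inferInstance ⊔ MeasurableSpace.comap (S i.1) inferInstance)]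
        =ᵐ[P] fun ω => ∫ t, g t ∂(Sker (Z n ω)))
    (hcondZ : ∀ n : ℕ, ∀ g : (EuclideanSpace ℝ (Fin d)) → ℝ, Measurable g → (∃ C, ∀ u, |g u| ≤ C) →
      P[fun ω => g (Z (n+1) ω)|(⨆ i : Fin (n+1),
          (MeasurableSpace.comap (Z i.1) inferInstance ⊔ MeasurableSpace.comap (S i.1) inferInstance)) ⊔
          MeasurableSpace.comap (S (n+1)) inferInstance]
        =ᵐ[P] fun ω => ∫ u, g u ∂(Qm (Φ (Z n ω) (S (n+1) ω)))) :
    ∀ n : ℕ, 1 ≤ n → ∀ B : Set (EuclideanSpace ℝ (Fin d)), MeasurableSet B →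
      P[fun ω => Set.indicator B (fun _ => (1:ℝ)) (Φ (Z n ω) (S (n+1) ω))|
          ⨆ i : Fin n, MeasurableSpace.comap (fun ω => Φ (Z i.1 ω) (S (i.1+1) ω)) inferInstance]
        =ᵐ[P] fun ω =>
          (∫⁻ z in E, Sker z {t : ℝ | 0 ≤ t ∧ Φ z t ∈ B}
            ∂(Qm (Φ (Z (n-1) ω) (S n ω)))).toReal := by
  classical
  intro n hn B hB
  obtain ⟨m, rfl⟩ : ∃ m, n = m + 1 := ⟨n - 1, by omega⟩
  simp only [Nat.add_sub_cancel]
  have hEm : MeasurableSet E := hEopen.measurableSet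
  -- modified Markov kernel
  let κ : Kernel (EuclideanSpace ℝ (Fin d)) ℝ :=
    { toFun := fun z => if z ∈ E then Sker z else Measure.dirac 0
      measurable' := Measurable.ite hEm (Measure.measurable_of_measurable_coe _ hSkermeas)
        measurable_const }
  have hκE : ∀ z ∈ E, κ z = Sker z := fun z hz => if_pos hz
  have hκE' : ∀ z, z ∉ E → κ z = Measure.dirac 0 := fun z hz => if_neg hz
  have : IsMarkovKernel κ := ⟨fun z => by
    by_cases hz : z ∈ E
    · rw [hκE z hz]; exact hSprob z hz
    · rw [hκE' z hz]; infer_instance⟩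
  let G : ℕ → MeasurableSpace Ω := fun n => ⨆ i : Fin (n+1),
    (MeasurableSpace.comap (Z i.1) inferInstance ⊔ MeasurableSpace.comap (S i.1) inferInstance)
  have hGle : ∀ n, G n ≤ ‹MeasurableSpace Ω› := fun n =>
    iSup_le fun i => sup_le (hZmeas _).comap_le (hSmeas _).comap_le
  have hZG : ∀ i n, i ≤ n → Measurable[G n] (Z i) := fun i n hi =>
    measurable_iff_comap_le.2 (le_sup_left.trans (le_iSup (fun i : Fin (n+1) =>
      (MeasurableSpace.comap (Z i.1) inferInstance ⊔
        MeasurableSpace.comap (S i.1) inferInstance)) ⟨i, by omega⟩))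
  have hSG : ∀ i n, i ≤ n → Measurable[G n] (S i) := fun i n hi =>
    measurable_iff_comap_le.2 (le_sup_right.trans (le_iSup (fun i : Fin (n+1) =>
      (MeasurableSpace.comap (Z i.1) inferInstance ⊔
        MeasurableSpace.comap (S i.1) inferInstance)) ⟨i, by omega⟩))
  let K : MeasurableSpace Ω := G m ⊔ MeasurableSpace.comap (S (m+1)) inferInstance
  have hGmono : G m ≤ G (m+1) := iSup_le fun i => sup_le
    (measurable_iff_comap_le.1 (hZG _ _ (by omega)))
    (measurable_iff_comap_le.1 (hSG _ _ (by omega)))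
  have hKG : K ≤ G (m+1) := sup_le hGmono (measurable_iff_comap_le.1 (hSG _ _ le_rfl))
  have hKle := hKG.trans (hGle (m+1))
  have hSK : ∀ i, i ≤ m + 1 → Measurable[K] (S i) := by
    intro i hi
    rcases Nat.lt_or_ge m i with h | h
    · obtain rfl : i = m + 1 := by omega
      exact measurable_iff_comap_le.2 le_sup_right
    · exact (hSG i m h).mono le_sup_left le_rfl
  have hZK : ∀ i, i ≤ m → Measurable[K] (Z i) := fun i hi =>
    (hZG i m hi).mono le_sup_left le_rfl
  let H : MeasurableSpace Ω := ⨆ i : Fin (m+1),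
    MeasurableSpace.comap (fun ω => Φ (Z i.1 ω) (S (i.1+1) ω)) inferInstance
  have hHK : H ≤ K := iSup_le fun i => measurable_iff_comap_le.1
    (hΦmeas.comp ((hZK i.1 (by omega)).prodMk (hSK (i.1+1) (by omega))))
  have hHle := hHK.trans hKle
  let A : Set (EuclideanSpace ℝ (Fin d) × ℝ) := (fun p => Φ p.1 p.2) ⁻¹' B
  have hA : MeasurableSet A := hΦmeas hB
  let f : EuclideanSpace ℝ (Fin d) → ℝ := fun z => (κ z).real (Prod.mk z ⁻¹' A)
  have hfm : Measurable f := (Kernel.measurable_kernel_prodMk_left hA).ennreal_toReal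
  -- step 1
  have step1 : P[fun ω => Set.indicator B (fun _ => (1:ℝ)) (Φ (Z (m+1) ω) (S (m+1+1) ω))|G (m+1)]
      =ᵐ[P] fun ω => f (Z (m+1) ω) := by
    refine condExp_pair_aux (G (m+1)) P (hGle _) (Z (m+1)) (S (m+1+1)) (hZG _ _ le_rfl)
      (hSmeas _) κ ?_ A hA
    intro C hC
    refine (hcondS (m+1) (C.indicator fun _ => (1:ℝ)) (measurable_const.indicator hC)
      ⟨1, fun t => ?_⟩).trans (Eventually.of_forall fun ω => ?_)
    · by_cases h : t ∈ C <;> simp [h]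
    · simp only
      rw [hκE _ (hZmem _ ω), integral_indicator hC]
      simp [measureReal_def]
  -- step 2
  have step2 : P[fun ω => f (Z (m+1) ω)|K]
      =ᵐ[P] fun ω => ∫ u, f u ∂(Qm (Φ (Z m ω) (S (m+1) ω))) := by
    refine hcondZ m f hfm ⟨1, fun u => ?_⟩
    rw [abs_of_nonneg measureReal_nonneg]
    exact measureReal_le_one
  let Qk : Kernel (EuclideanSpace ℝ (Fin d)) (EuclideanSpace ℝ (Fin d)) :=
    ⟨Qm, Measure.measurable_of_measurable_coe _ hQkermeas⟩
  have hr : ∀ y, ∫ u, f u ∂(Qm y)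
      = (∫⁻ z, κ z (Prod.mk z ⁻¹' A) ∂(Qk y)).toReal := by
    intro y
    refine integral_toReal (Kernel.measurable_kernel_prodMk_left hA).aemeasurable
      (Eventually.of_forall fun ω => measure_lt_top _ _)
  have hrm : Measurable fun y => ∫ u, f u ∂(Qm y) := by
    simp_rw [hr]
    exact ((Kernel.measurable_kernel_prodMk_left hA).lintegral_kernel).ennreal_toReal
  have hreq : ∀ y, ∫ u, f u ∂(Qm y)
      = (∫⁻ z in E, Sker z {t : ℝ | 0 ≤ t ∧ Φ z t ∈ B} ∂(Qm y)).toReal := by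
    intro y
    rw [hr]
    have e : (Qm y).restrict E = Qm y := Measure.restrict_eq_self_of_ae_mem (hQsupp y)
    have e2 : ∫⁻ z, κ z (Prod.mk z ⁻¹' A) ∂(Qk y) = ∫⁻ z in E, κ z (Prod.mk z ⁻¹' A) ∂(Qm y) := by
      rw [e]; rfl
    rw [e2]
    congr 1
    refine setLIntegral_congr_fun hEm fun z hz => ?_
    rw [hκE z hz]
    refine measure_congr ?_
    have h0 : ∀ᵐ t ∂(Sker z), t ∉ Set.Iio (0:ℝ) := measure_eq_zero_iff_ae_notMem.1 (hSsupp z hz)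
    refine eventuallyEq_set.2 ?_
    filter_upwards [h0] with t ht
    have : 0 ≤ t := by simpa using ht
    simp [A, this]
  have hHlast : Measurable[H] (fun ω => Φ (Z m ω) (S (m+1) ω)) :=
    measurable_iff_comap_le.2 (le_iSup (fun i : Fin (m+1) =>
      MeasurableSpace.comap (fun ω => Φ (Z i.1 ω) (S (i.1+1) ω)) inferInstance)
      ⟨m, by omega⟩)
  have hbound : ∀ y, ‖∫ u, f u ∂(Qm y)‖ ≤ 1 := by
    intro y
    have := hQprob y
    refine (norm_integral_le_of_norm_le_const (C := 1) (Eventually.of_forall fun u => ?_)).trans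
      (by simp)
    rw [Real.norm_of_nonneg measureReal_nonneg]
    exact measureReal_le_one
  have hRm : Measurable[H] fun ω => ∫ u, f u ∂(Qm (Φ (Z m ω) (S (m+1) ω))) := hrm.comp hHlast
  have hRint : Integrable (fun ω => ∫ u, f u ∂(Qm (Φ (Z m ω) (S (m+1) ω)))) P :=
    Integrable.of_bound (hRm.mono hHle le_rfl).aestronglyMeasurable 1
      (Eventually.of_forall fun ω => hbound _)
  have t1 := condExp_condExp_of_le (μ := P)
    (f := fun ω => Set.indicator B (fun _ => (1:ℝ)) (Φ (Z (m+1) ω) (S (m+1+1) ω)))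
    (hHK.trans hKG) (hGle (m+1))
  have t2 := condExp_condExp_of_le (μ := P) (f := fun ω => f (Z (m+1) ω)) hHK hKle
  have t3 := condExp_of_stronglyMeasurable hHle hRm.stronglyMeasurable hRint
  have t4 := condExp_congr_ae (m := H) step1
  have t5 := condExp_congr_ae (m := H) step2
  simp_rw [← hreq]
  change P[fun ω => Set.indicator B (fun _ => (1:ℝ)) (Φ (Z (m+1) ω) (S (m+1+1) ω))|H] =ᵐ[P] _
  refine (t1.symm.trans t4).trans (t2.symm.trans (t5.trans ?_))
  rw [t3]
end

section
/- The function r : ℝ^d × E → [0, ∞) defined by r(x, y) := ∫_0^{−t⁻(y)} q(x, Φ_y(−s)) f(Φ_y(−s), s) DΦ_y(−s) ds is bounded, with ‖r‖_∞ ≤ ‖t⁻‖_∞ ‖q‖_∞ ‖f‖_∞ ‖DΦ‖_∞, and there exists a constant [r]_Lip > 0 such that for every x ∈ ℝ^d, every y ∈ E and every u ∈ ℝ^d with y + u ∈ E, |r(x, y + u) − r(x, y)| ≤ [r]_Lip |u|. -/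
open MeasureTheory ProbabilityTheory Filter

theorem stmt10
    {d : ℕ} (hd : 1 ≤ d)
    (E : Set (EuclideanSpace ℝ (Fin d))) (hEopen : IsOpen E) (hEne : E.Nonempty)
    (tminus : (EuclideanSpace ℝ (Fin d)) → ℝ) (htmmeas : Measurable tminus) (htmneg : ∀ y ∈ E, tminus y ≤ 0)
    (Ct : ℝ) (htmbdd : ∀ y ∈ E, |tminus y| ≤ Ct)
    (tmLip : ℝ) (htmLip : ∀ x ∈ E, ∀ y ∈ E, |tminus x - tminus y| ≤ tmLip * dist x y)
    (Φ : (EuclideanSpace ℝ (Fin d)) → ℝ → (EuclideanSpace ℝ (Fin d))) (hΦmeas : Measurable (fun p : (EuclideanSpace ℝ (Fin d)) × ℝ => Φ p.1 p.2))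
    (ΦLip : ℝ) (hΦLip : ∀ x y : (EuclideanSpace ℝ (Fin d)), ∀ t : ℝ, dist (Φ x t) (Φ y t) ≤ ΦLip * dist x y)
    (f : (EuclideanSpace ℝ (Fin d)) → ℝ → ℝ) (hfmeas : Measurable (fun p : (EuclideanSpace ℝ (Fin d)) × ℝ => f p.1 p.2))
    (hfnonneg : ∀ x t, 0 ≤ f x t)
    (Cf : ℝ) (hfbdd : ∀ x t, |f x t| ≤ Cf)
    (fLip : ℝ) (hfLip : ∀ x y : (EuclideanSpace ℝ (Fin d)), ∀ t : ℝ, |f x t - f y t| ≤ fLip * dist x y)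
    (q : (EuclideanSpace ℝ (Fin d)) → (EuclideanSpace ℝ (Fin d)) → ℝ) (hqmeas : Measurable (Function.uncurry q)) (hqnonneg : ∀ a b, 0 ≤ q a b)
    (Cq : ℝ) (hqbdd : ∀ a b, |q a b| ≤ Cq)
    (qLip : ℝ) (hqLip1 : ∀ a b b' : (EuclideanSpace ℝ (Fin d)), |q a b - q a b'| ≤ qLip * dist b b')
    (hqLip2 : ∀ a a' b : (EuclideanSpace ℝ (Fin d)), |q a b - q a' b| ≤ qLip * dist a a')
    (DΦ : (EuclideanSpace ℝ (Fin d)) → ℝ → ℝ) (hDΦmeas : Measurable (fun p : (EuclideanSpace ℝ (Fin d)) × ℝ => DΦ p.1 p.2))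
    (hDΦnonneg : ∀ x t, 0 ≤ DΦ x t)
    (CD : ℝ) (hDΦbdd : ∀ x t, |DΦ x t| ≤ CD)
    (DΦLip : ℝ) (hDΦLip : ∀ x y : (EuclideanSpace ℝ (Fin d)), ∀ t : ℝ, |DΦ x t - DΦ y t| ≤ DΦLip * dist x y)
    (r : (EuclideanSpace ℝ (Fin d)) → (EuclideanSpace ℝ (Fin d)) → ℝ)
    (hr : ∀ x : (EuclideanSpace ℝ (Fin d)), ∀ y ∈ E, r x y =
      ∫ s in (0:ℝ)..(-(tminus y)), q x (Φ y (-s)) * f (Φ y (-s)) s * DΦ y (-s)) :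
    (∀ x : (EuclideanSpace ℝ (Fin d)), ∀ y ∈ E, |r x y| ≤ Ct * Cq * Cf * CD) ∧
    ∃ L : ℝ, 0 < L ∧ ∀ x : (EuclideanSpace ℝ (Fin d)), ∀ y ∈ E, ∀ u : (EuclideanSpace ℝ (Fin d)), y + u ∈ E →
      |r x (y + u) - r x y| ≤ L * ‖u‖ := by
  have hCq : 0 ≤ Cq := (abs_nonneg _).trans (hqbdd 0 0)
  have hCf : 0 ≤ Cf := (abs_nonneg _).trans (hfbdd 0 0)
  have hCD : 0 ≤ CD := (abs_nonneg _).trans (hDΦbdd 0 0)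
  have hCt : 0 ≤ Ct := by
    obtain ⟨y, hy⟩ := hEne
    exact (abs_nonneg _).trans (htmbdd y hy)
  set g : EuclideanSpace ℝ (Fin d) → EuclideanSpace ℝ (Fin d) → ℝ → ℝ :=
    fun x y s => q x (Φ y (-s)) * f (Φ y (-s)) s * DΦ y (-s) with hg
  have hgb : ∀ x y s, ‖g x y s‖ ≤ Cq * Cf * CD := by
    intro x y s
    simp only [hg, Real.norm_eq_abs, abs_mul]
    have h1 := hqbdd x (Φ y (-s))
    have h2 := hfbdd (Φ y (-s)) s
    have h3 := hDΦbdd y (-s)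
    gcongr
  have hgm : ∀ x y, Measurable (g x y) := by
    intro x y
    have h1 : Measurable (fun s : ℝ => Φ y (-s)) :=
      hΦmeas.comp (measurable_const.prodMk measurable_neg)
    have h2 : Measurable (fun s : ℝ => q x (Φ y (-s))) :=
      hqmeas.comp (measurable_const.prodMk h1)
    have h3 : Measurable (fun s : ℝ => f (Φ y (-s)) s) :=
      hfmeas.comp (h1.prodMk measurable_id)
    have h4 : Measurable (fun s : ℝ => DΦ y (-s)) :=
      hDΦmeas.comp (measurable_const.prodMk measurable_neg)
    exact (h2.mul h3).mul h4
  have hgi : ∀ x y a b, IntervalIntegrable (g x y) volume a b := by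
    intro x y a b
    refine (intervalIntegrable_const (c := Cq * Cf * CD)).mono_fun
      (hgm x y).aestronglyMeasurable (Eventually.of_forall fun s => ?_)
    exact (hgb x y s).trans (le_abs_self _)
  set K : ℝ := |qLip| * |ΦLip| * Cf * CD + Cq * (|fLip| * |ΦLip|) * CD
    + Cq * Cf * |DΦLip| with hK
  have hK0 : 0 ≤ K := by positivity
  have hgL : ∀ x y z s, ‖g x z s - g x y s‖ ≤ K * dist z y := by
    intro x y z s
    have hP : dist (Φ z (-s)) (Φ y (-s)) ≤ |ΦLip| * dist z y :=
      (hΦLip z y (-s)).trans (by gcongr; exact le_abs_self _)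
    have hq1 : |q x (Φ z (-s)) - q x (Φ y (-s))| ≤ |qLip| * (|ΦLip| * dist z y) :=
      (hqLip1 x _ _).trans (by gcongr; exact le_abs_self _)
    have hf1 : |f (Φ z (-s)) s - f (Φ y (-s)) s| ≤ |fLip| * (|ΦLip| * dist z y) :=
      (hfLip _ _ s).trans (by gcongr; exact le_abs_self _)
    have hD1 : |DΦ z (-s) - DΦ y (-s)| ≤ |DΦLip| * dist z y :=
      (hDΦLip _ _ _).trans (by gcongr; exact le_abs_self _)
    have b1 := hfbdd (Φ z (-s)) s
    have b2 := hDΦbdd z (-s)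
    have b3 := hqbdd x (Φ y (-s))
    have b4 := hfbdd (Φ y (-s)) s
    have e : g x z s - g x y s =
        (q x (Φ z (-s)) - q x (Φ y (-s))) * f (Φ z (-s)) s * DΦ z (-s)
        + q x (Φ y (-s)) * (f (Φ z (-s)) s - f (Φ y (-s)) s) * DΦ z (-s)
        + q x (Φ y (-s)) * f (Φ y (-s)) s * (DΦ z (-s) - DΦ y (-s)) := by
      simp only [hg]; ring
    rw [e, Real.norm_eq_abs]
    refine (abs_add_three _ _ _).trans ?_
    simp only [abs_mul]
    calc _ ≤ (|qLip| * (|ΦLip| * dist z y)) * Cf * CD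
          + Cq * (|fLip| * (|ΦLip| * dist z y)) * CD
          + Cq * Cf * (|DΦLip| * dist z y) := by gcongr
      _ = K * dist z y := by rw [hK]; ring
  constructor
  · intro x y hy
    rw [hr x y hy]
    have h := intervalIntegral.norm_integral_le_of_norm_le_const
      (a := 0) (b := -(tminus y)) (f := g x y) (fun s _ => hgb x y s)
    rw [Real.norm_eq_abs, sub_zero, abs_neg] at h
    refine h.trans ?_
    calc _ ≤ Cq * Cf * CD * Ct := by gcongr; exact htmbdd y hy
      _ = _ := by ring
  · refine ⟨K * Ct + Cq * Cf * CD * |tmLip| + 1, by positivity, ?_⟩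
    intro x y hy u hu
    have hd' : dist (y + u) y = ‖u‖ := by simp [dist_eq_norm]
    have e : r x (y + u) - r x y = (∫ s in (0:ℝ)..(-(tminus y)), (g x (y + u) s - g x y s))
        + ∫ s in (-(tminus y))..(-(tminus (y + u))), g x (y + u) s := by
      rw [hr x y hy, hr x _ hu, intervalIntegral.integral_sub (hgi _ _ _ _) (hgi _ _ _ _),
        ← intervalIntegral.integral_add_adjacent_intervals
          (hgi x (y + u) 0 (-(tminus y))) (hgi x (y + u) (-(tminus y)) (-(tminus (y + u))))]
      ring
    have h1 := intervalIntegral.norm_integral_le_of_norm_le_const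
      (a := 0) (b := -(tminus y)) (f := fun s => g x (y + u) s - g x y s)
      (fun s _ => hgL x y (y + u) s)
    have h2 := intervalIntegral.norm_integral_le_of_norm_le_const
      (a := -(tminus y)) (b := -(tminus (y + u))) (f := g x (y + u))
      (fun s _ => hgb x (y + u) s)
    rw [hd', Real.norm_eq_abs, sub_zero, abs_neg] at h1
    have e2 : |-(tminus (y + u)) - -(tminus y)| = |tminus (y + u) - tminus y| := by
      rw [← abs_neg]; congr 1; ring
    rw [Real.norm_eq_abs, e2] at h2
    have h3 : |tminus (y + u) - tminus y| ≤ |tmLip| * ‖u‖ := by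
      rw [← hd']
      exact (htmLip _ hu _ hy).trans (by gcongr; exact le_abs_self _)
    have h4 := htmbdd y hy
    rw [e]
    refine (abs_add_le _ _).trans ?_
    calc _ ≤ K * ‖u‖ * |tminus y| + Cq * Cf * CD * |tminus (y + u) - tminus y| := add_le_add h1 h2
      _ ≤ K * ‖u‖ * Ct + Cq * Cf * CD * (|tmLip| * ‖u‖) := by gcongr
      _ ≤ _ := by nlinarith [norm_nonneg u]
end

section
/- Fix (x, y) ∈ E × E and define ĥₙ(x, y) := n^{−1} Σ_{j=1}^{n+1} Aⱼ with Aⱼ := wⱼ^{−2d} K((Zⱼ⁻ − x)/wⱼ) K((Zⱼ − y)/wⱼ). Then for every n ≥ 1, Var(ĥₙ(x, y)) ≤ 8 ‖K‖_∞⁴ B / (n · w_{n+1}^{4d} · (1 − b^{−1})). In particular, if 4βd < 1, this variance tends to 0 as n → ∞. -/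
open MeasureTheory ProbabilityTheory Filter


lemma aux_geom_s16 (r : ℝ) (h0 : 0 ≤ r) (h1 : r < 1) (S : Finset ℕ) (f : ℕ → ℕ)
    (hf : Set.InjOn f S) : ∑ k ∈ S, r ^ (f k) ≤ (1 - r)⁻¹ := by
  rw [← Finset.sum_image (f := fun i => r ^ i) (g := f) hf, ← tsum_geometric_of_lt_one h0 h1]
  exact (summable_geometric_of_lt_one h0 h1).sum_le_tsum _ (fun i _ => pow_nonneg h0 i)

lemma aux_geom2 (r : ℝ) (h0 : 0 ≤ r) (h1 : r < 1) (N j : ℕ) :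
    ∑ k ∈ Finset.Icc 1 N, r ^ ((j - k) + (k - j)) ≤ 2 * (1 - r)⁻¹ := by
  rw [← Finset.sum_filter_add_sum_filter_not (Finset.Icc 1 N) (fun k => k ≤ j)]
  have a := aux_geom_s16 r h0 h1 ((Finset.Icc 1 N).filter (fun k => k ≤ j))
    (fun k => (j - k) + (k - j)) (by
      intro a ha b hb hab
      simp at ha hb hab
      omega)
  have b := aux_geom_s16 r h0 h1 ((Finset.Icc 1 N).filter (fun k => ¬ k ≤ j))
    (fun k => (j - k) + (k - j)) (by
      intro a ha b hb hab
      simp at ha hb hab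
      omega)
  linarith

lemma aux_var {Ω : Type*} [MeasurableSpace Ω] (P : Measure Ω) [IsProbabilityMeasure P]
    (A : ℕ → Ω → ℝ) (hA : ∀ j, MemLp (A j) 2 P) (M r : ℝ) (hM : 0 ≤ M) (h0 : 0 ≤ r) (h1 : r < 1)
    (n : ℕ) (hn : 1 ≤ n)
    (hc : ∀ j k, 1 ≤ j → j ≤ k → k ≤ n + 1 → cov[A j, A k; P] ≤ M * (r ^ (k - j) * 2)) :
    Var[fun ω => (n:ℝ)⁻¹ * ∑ j ∈ Finset.Icc 1 (n+1), A j ω; P] ≤ 8 * M / (n * (1 - r)) := by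
  have hn' : (1:ℝ) ≤ n := by exact_mod_cast hn
  have hr : 0 < 1 - r := by linarith
  rw [variance_const_mul]
  have e : Var[fun ω => ∑ j ∈ Finset.Icc 1 (n+1), A j ω; P]
      = ∑ j ∈ Finset.Icc 1 (n+1), ∑ k ∈ Finset.Icc 1 (n+1), cov[A j, A k; P] :=
    variance_fun_sum' (fun i _ => hA i)
  have s : ∑ j ∈ Finset.Icc 1 (n+1), ∑ k ∈ Finset.Icc 1 (n+1), cov[A j, A k; P]
      ≤ ∑ j ∈ Finset.Icc 1 (n+1), 2 * M * (2 * (1 - r)⁻¹) := by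
    refine Finset.sum_le_sum fun j hj => ?_
    refine le_trans ?_ (mul_le_mul_of_nonneg_left (aux_geom2 r h0 h1 (n+1) j)
      (by positivity : 0 ≤ 2 * M))
    rw [Finset.mul_sum]
    refine Finset.sum_le_sum fun k hk => ?_
    simp at hj hk
    rcases le_total j k with h | h
    · have := hc j k hj.1 h hk.2
      have e : (j - k) + (k - j) = k - j := by omega
      rw [e]; linarith
    · have := hc k j hk.1 h hj.2
      have e : (j - k) + (k - j) = j - k := by omega
      rw [e, covariance_comm]; linarith
  rw [e]
  simp only [Finset.sum_const, Nat.card_Icc, nsmul_eq_mul] at s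
  push_cast at s
  have s2 : ((n:ℝ) + 1 + 1 - 1) * (2 * M * (2 * (1 - r)⁻¹)) ≤ (2 * n) * (2 * M * (2 * (1 - r)⁻¹)) := by
    apply mul_le_mul_of_nonneg_right (by linarith)
    have := inv_pos.mpr hr
    positivity
  have s3 : ∑ j ∈ Finset.Icc 1 (n+1), ∑ k ∈ Finset.Icc 1 (n+1), cov[A j, A k; P]
      ≤ (2 * n) * (2 * M * (2 * (1 - r)⁻¹)) := by
    refine le_trans s (le_trans (le_of_eq ?_) s2)
    simp
  calc _ ≤ ((n:ℝ)⁻¹)^2 * ((2 * n) * (2 * M * (2 * (1 - r)⁻¹))) :=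
        mul_le_mul_of_nonneg_left s3 (by positivity)
    _ = _ := by field_simp; ring

set_option maxHeartbeats 4000000 in
theorem stmt16
    {d : ℕ} (hd : 1 ≤ d)
    {Ω : Type*} [MeasurableSpace Ω] (P : Measure Ω) [IsProbabilityMeasure P]
    (E : Set (EuclideanSpace ℝ (Fin d))) (hEopen : IsOpen E) (hEne : E.Nonempty)
    (Zm Z : ℕ → Ω → (EuclideanSpace ℝ (Fin d))) (hZmmeas : ∀ n, Measurable (Zm n)) (hZmeas : ∀ n, Measurable (Z n))
    (hZmmem : ∀ n ω, Zm n ω ∈ closure E) (hZmem : ∀ n ω, Z n ω ∈ E)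
    (K : (EuclideanSpace ℝ (Fin d)) → ℝ) (hKmeas : Measurable K) (hKnonneg : ∀ z, 0 ≤ K z)
    (CK : ℝ) (hKbdd : ∀ z, K z ≤ CK)
    (Bc bc : ℝ) (hBc : 0 < Bc) (hbc : 1 < bc)
    (hcov : ∀ g h : (EuclideanSpace ℝ (Fin d)) → (EuclideanSpace ℝ (Fin d)) → ℝ, Measurable (Function.uncurry g) → Measurable (Function.uncurry h) →
      (∀ a b, |g a b| ≤ 1) → (∀ a b, |h a b| ≤ 1) →
      ∀ m n : ℕ, 1 ≤ m → m ≤ n →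
        |∫ ω, g (Zm m ω) (Z m ω) * h (Zm n ω) (Z n ω) ∂P -
          (∫ ω, g (Zm m ω) (Z m ω) ∂P) * (∫ ω, h (Zm n ω) (Z n ω) ∂P)| ≤
          Bc * bc ^ (-((n:ℝ) - (m:ℝ))) * (1 + bc ^ (-(m:ℝ))))
    (w1 Beta : ℝ) (hw1 : 0 < w1) (hBeta : 0 < Beta)
    (w : ℕ → ℝ) (hw : ∀ j : ℕ, w j = w1 * (j:ℝ) ^ (-Beta))
    (x y : (EuclideanSpace ℝ (Fin d))) (hx : x ∈ E) (hy : y ∈ E)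
    (A : ℕ → Ω → ℝ)
    (hA : ∀ j ω, A j ω = ((w j) ^ (2*d))⁻¹ *
      (K ((w j)⁻¹ • (Zm j ω - x)) * K ((w j)⁻¹ • (Z j ω - y))))
    (hhat : ℕ → Ω → ℝ)
    (hhhat : ∀ n ω, hhat n ω = (n:ℝ)⁻¹ * ∑ j ∈ Finset.Icc 1 (n+1), A j ω) :
    (∀ n : ℕ, 1 ≤ n →
      ∫ ω, (hhat n ω - ∫ ω', hhat n ω' ∂P) ^ 2 ∂P ≤
        8 * CK ^ 4 * Bc / ((n:ℝ) * (w (n+1)) ^ (4*d) * (1 - bc⁻¹))) ∧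
    (4 * Beta * d < 1 →
      Tendsto (fun n : ℕ => ∫ ω, (hhat n ω - ∫ ω', hhat n ω' ∂P) ^ 2 ∂P) atTop (nhds 0)) := by
  have hCK : 0 ≤ CK := le_trans (hKnonneg 0) (hKbdd 0)
  have hr0 : 0 ≤ bc⁻¹ := by positivity
  have hr1 : bc⁻¹ < 1 := inv_lt_one_of_one_lt₀ hbc
  have hwpos : ∀ j : ℕ, 1 ≤ j → 0 < w j := by
    intro j hj
    have : (0:ℝ) < j := by exact_mod_cast hj
    rw [hw]; positivity
  have hwanti : ∀ j k : ℕ, 1 ≤ j → j ≤ k → w k ≤ w j := by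
    intro j k hj hjk
    have h1 : (0:ℝ) < j := by exact_mod_cast hj
    have h2 : (j:ℝ) ≤ k := by exact_mod_cast hjk
    rw [hw, hw]
    exact mul_le_mul_of_nonneg_left (Real.rpow_le_rpow_of_nonpos h1 h2 (by linarith)) hw1.le
  let g : ℕ → EuclideanSpace ℝ (Fin d) → EuclideanSpace ℝ (Fin d) → ℝ := fun j a b =>
    (CK ^ 2)⁻¹ * (K ((w j)⁻¹ • (a - x)) * K ((w j)⁻¹ • (b - y)))
  have hgm : ∀ j, Measurable (Function.uncurry (g j)) := by
    intro j
    have : Function.uncurry (g j) = fun p => (CK ^ 2)⁻¹ *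
      (K ((w j)⁻¹ • (p.1 - x)) * K ((w j)⁻¹ • (p.2 - y))) := rfl
    rw [this]
    fun_prop
  have hKK : ∀ u v, K u * K v ≤ CK ^ 2 := by
    intro u v
    rw [sq]
    exact mul_le_mul (hKbdd u) (hKbdd v) (hKnonneg v) hCK
  have hgb : ∀ j a b, |g j a b| ≤ 1 := by
    intro j a b
    have h := hKK ((w j)⁻¹ • (a - x)) ((w j)⁻¹ • (b - y))
    have h' := mul_nonneg (hKnonneg ((w j)⁻¹ • (a - x))) (hKnonneg ((w j)⁻¹ • (b - y)))
    rw [abs_of_nonneg (mul_nonneg (by positivity) h')]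
    exact inv_mul_le_one_of_le₀ h (by positivity)
  let G : ℕ → Ω → ℝ := fun j ω => g j (Zm j ω) (Z j ω)
  have hGm : ∀ j, Measurable (G j) := fun j =>
    (hgm j).comp ((hZmmeas j).prodMk (hZmeas j))
  have hGL : ∀ j, MemLp (G j) 2 P := fun j =>
    MemLp.of_bound (hGm j).aestronglyMeasurable 1 (Eventually.of_forall fun ω => hgb _ _ _)
  have hAG : ∀ j, A j = fun ω => (((w j) ^ (2*d))⁻¹ * CK ^ 2) * G j ω := by
    intro j
    funext ω
    rw [hA]
    by_cases h : CK = 0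
    · have h1 := hKK ((w j)⁻¹ • (Zm j ω - x)) ((w j)⁻¹ • (Z j ω - y))
      have h2 := mul_nonneg (hKnonneg ((w j)⁻¹ • (Zm j ω - x))) (hKnonneg ((w j)⁻¹ • (Z j ω - y)))
      rw [h] at h1 ⊢
      have h3 : K ((w j)⁻¹ • (Zm j ω - x)) * K ((w j)⁻¹ • (Z j ω - y)) = 0 := by
        apply le_antisymm _ h2
        simpa using h1
      rw [h3]; simp
    · simp only [G, g]
      field_simp
  have hAL : ∀ j, MemLp (A j) 2 P := by
    intro j
    rw [hAG]
    exact (hGL j).const_mul _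
  have hGc : ∀ j k, 1 ≤ j → j ≤ k → |cov[G j, G k; P]| ≤ Bc * ((bc⁻¹) ^ (k - j) * 2) := by
    intro j k hj hjk
    rw [covariance_eq_sub (hGL j) (hGL k)]
    refine le_trans (hcov (g j) (g k) (hgm j) (hgm k) (hgb j) (hgb k) j k hj hjk) ?_
    have e : bc ^ (-((k:ℝ) - (j:ℝ))) = (bc⁻¹) ^ (k - j) := by
      rw [← Nat.cast_sub hjk, Real.rpow_neg (by linarith), Real.rpow_natCast, inv_pow]
    have e2 : bc ^ (-(j:ℝ)) ≤ 1 := Real.rpow_le_one_of_one_le_of_nonpos hbc.le (by simp)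
    rw [e, mul_assoc]
    apply mul_le_mul_of_nonneg_left _ hBc.le
    apply mul_le_mul_of_nonneg_left _ (by positivity)
    linarith
  have hvar : ∀ n, ∫ ω, (hhat n ω - ∫ ω', hhat n ω' ∂P) ^ 2 ∂P
      = Var[fun ω => (n:ℝ)⁻¹ * ∑ j ∈ Finset.Icc 1 (n+1), A j ω; P] := by
    intro n
    have e : hhat n = fun ω => (n:ℝ)⁻¹ * ∑ j ∈ Finset.Icc 1 (n+1), A j ω := funext (hhhat n)
    rw [← e, variance_eq_integral]
    rw [e]
    exact ((memLp_finsetSum _ (fun j _ => hAL j)).const_mul _).aestronglyMeasurable.aemeasurable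
  have main : ∀ n : ℕ, 1 ≤ n →
      ∫ ω, (hhat n ω - ∫ ω', hhat n ω' ∂P) ^ 2 ∂P ≤
        8 * CK ^ 4 * Bc / ((n:ℝ) * (w (n+1)) ^ (4*d) * (1 - bc⁻¹)) := by
    intro n hn
    have hwn := hwpos (n+1) (by omega)
    have hn' : (0:ℝ) < n := by exact_mod_cast hn
    rw [hvar]
    let D := ((w (n+1)) ^ (2*d))⁻¹ * CK ^ 2
    have hD : 0 ≤ D := by positivity
    refine le_trans (aux_var P A hAL (D ^ 2 * Bc) bc⁻¹ (by positivity) hr0 hr1 n hn ?_)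
      (le_of_eq ?_)
    · intro j k hj hjk hk
      have hb : ∀ i, 1 ≤ i → i ≤ n + 1 → ((w i) ^ (2*d))⁻¹ * CK ^ 2 ≤ D := by
        intro i hi hin
        apply mul_le_mul_of_nonneg_right _ (by positivity)
        exact inv_anti₀ (by positivity) (pow_le_pow_left₀ hwn.le (hwanti i _ hi hin) _)
      have hp : ∀ i, 1 ≤ i → 0 ≤ ((w i) ^ (2*d))⁻¹ * CK ^ 2 := by
        intro i hi
        have := hwpos i hi
        positivity
      rw [hAG j, hAG k, covariance_const_mul_left, covariance_const_mul_right, ← mul_assoc]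
      have h1 := hb j hj (hjk.trans hk)
      have h2 := hb k (hj.trans hjk) hk
      calc _ ≤ (((w j) ^ (2*d))⁻¹ * CK ^ 2 * (((w k) ^ (2*d))⁻¹ * CK ^ 2)) *
            (Bc * ((bc⁻¹) ^ (k - j) * 2)) :=
          mul_le_mul_of_nonneg_left (le_trans (le_abs_self _) (hGc j k hj hjk))
            (mul_nonneg (hp j hj) (hp k (hj.trans hjk)))
        _ ≤ (D * D) * (Bc * ((bc⁻¹) ^ (k - j) * 2)) := by
          apply mul_le_mul_of_nonneg_right _ (by positivity)
          exact mul_le_mul h1 h2 (hp k (hj.trans hjk)) hD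
        _ = _ := by ring
    · have e : (w (n+1)) ^ (4*d) = ((w (n+1)) ^ (2*d)) ^ 2 := by
        rw [← pow_mul]; congr 1; ring
      have hr : 1 - bc⁻¹ ≠ 0 := by linarith
      have hwne : (w (n+1)) ^ (2*d) ≠ 0 := by positivity
      simp only [D]
      rw [e]
      generalize (w (n+1)) ^ (2*d) = q at *
      generalize 1 - bc⁻¹ = s at *
      field_simp
  refine ⟨main, fun hbd => ?_⟩
  have hr : 0 < 1 - bc⁻¹ := by linarith
  let C := 16 * CK ^ 4 * Bc / (w1 ^ (4*d) * (1 - bc⁻¹))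
  have hT : Tendsto (fun n : ℕ => C * (((n + 1 : ℕ) : ℝ)) ^ (-(1 - 4 * Beta * d))) atTop (nhds 0) := by
    have h := (tendsto_rpow_neg_atTop (y := 1 - 4 * Beta * d) (by linarith)).comp
      (tendsto_natCast_atTop_atTop.comp (tendsto_add_atTop_nat 1))
    simpa using h.const_mul C
  refine tendsto_of_tendsto_of_tendsto_of_le_of_le' tendsto_const_nhds hT
    (Eventually.of_forall fun n => integral_nonneg fun ω => sq_nonneg _) ?_
  filter_upwards [eventually_ge_atTop 1] with n hn
  refine le_trans (main n hn) ?_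
  have hn' : (1:ℝ) ≤ n := by exact_mod_cast hn
  have hm : (0:ℝ) < ((n + 1 : ℕ) : ℝ) := by positivity
  have hmn : ((n + 1 : ℕ) : ℝ) ≤ 2 * n := by push_cast; linarith
  have e1 : (w (n+1)) ^ (4*d) = w1 ^ (4*d) * (((n + 1 : ℕ) : ℝ) ^ (4 * Beta * d))⁻¹ := by
    rw [hw, mul_pow, ← Real.rpow_natCast (_ ^ (-Beta)), ← Real.rpow_mul hm.le,
      ← Real.rpow_neg hm.le]
    congr 2
    push_cast; ring
  have e2 : ((n + 1 : ℕ) : ℝ) ^ (-(1 - 4 * Beta * d))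
      = ((n + 1 : ℕ) : ℝ) ^ (4 * Beta * d) / ((n + 1 : ℕ) : ℝ) := by
    rw [show -(1 - 4 * Beta * d) = 4 * Beta * d - 1 by ring, Real.rpow_sub hm, Real.rpow_one]
  rw [e1, e2]
  have hq : 0 < ((n + 1 : ℕ) : ℝ) ^ (4 * Beta * d) := Real.rpow_pos_of_pos hm _
  simp only [C]
  generalize ((n + 1 : ℕ) : ℝ) ^ (4 * Beta * d) = q at *
  generalize ((n + 1 : ℕ) : ℝ) = m at *
  generalize 1 - bc⁻¹ = s at *
  have hwp : 0 < w1 ^ (4*d) := by positivity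
  generalize w1 ^ (4*d) = u at *
  have hR : 0 ≤ 8 * CK ^ 4 * Bc * q / (u * s) := by positivity
  have hnp : (0:ℝ) < n := by linarith
  calc _ = 8 * CK ^ 4 * Bc * q / (u * s) * (1 / n) := by field_simp
    _ ≤ 8 * CK ^ 4 * Bc * q / (u * s) * (2 / m) := by
      apply mul_le_mul_of_nonneg_left _ hR
      rw [div_le_div_iff₀ hnp hm]; linarith
    _ = _ := by field_simp; ring
end
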